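/- Let m_i, m_e, ν_i, ν_e, e, c > 0, set μ₂ = c²m_iν_im_eν_e/(4πe²(m_iν_i+m_eν_e)), and assume the cubic g(λ) = λ³ + (ν_i+ν_e)λ² + (ν_iν_e + 4π(e²/m_i+e²/m_e))λ + 4π(e²ν_e/m_i+e²ν_i/m_e) has three distinct complex roots. Then there exist constants r₀, C, λ > 0 such that for every k ∈ ℝ³, k ≠ 0, and every solution (û_i, û_e, Ê, B̂) of the Fourier-transformed transverse electromagnetic system at frequency k the following holds for all t ≥ 0, where B̄̂(t) = e^{−μ₂|k|²t}B̂(0), ū̂_i(t) = (c/(4πe))(m_eν_e/(m_iν_i+m_eν_e)) (i k)×B̄̂(t), ū̂_e(t) = −(c/(4πe))(m_iν_i/(m_iν_i+m_eν_e)) (i k)×B̄̂(t), Ē̂(t) = (c/(4πe²))(m_iν_im_eν_e/(m_iν_i+m_eν_e)) (i k)×B̄̂(t), and |Û_{0,⊥}|² = |û_i(0)|²+|û_e(0)|²+|Ê(0)|²+|B̂(0)|²: if |k| ≤ r₀ then |û_α(t) − ū̂_α(t)| ≤ C(|k|² e^{−λ|k|²t} + e^{−λt})|Û_{0,⊥}|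 for α = i,e and |Ê(t) − Ē̂(t)| ≤ C(|k|² e^{−λ|k|²t} + e^{−λt})|Û_{0,⊥}|; if |k| ≥ r₀ then |û_α(t) − ū̂_α(t)| ≤ C e^{−λ|k|^{-2}t}|Û_{0,⊥}| + C e^{−λ|k|²t}|k||B̂(0)| for α = i,e and |Ê(t) − Ē̂(t)| ≤ C e^{−λ|k|^{-2}t}|Û_{0,⊥}| + C e^{−λ|k|²t}|k||B̂(0)|. -/

import Mathlib

open Real Complex

/-- Squared Hermitian norm on `ℂ³`. -/
noncomputable def hsq (v : Fin 3 → ℂ) : ℝ := ∑ j, Complex.normSq (v j)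

/-- Hermitian norm on `ℂ³`. -/
noncomputable def hnorm (v : Fin 3 → ℂ) : ℝ := Real.sqrt (hsq v)

/-- Cross product on `ℂ³`. -/
def cross3 (u v : Fin 3 → ℂ) : Fin 3 → ℂ :=
  ![u 1 * v 2 - u 2 * v 1, u 2 * v 0 - u 0 * v 2, u 0 * v 1 - u 1 * v 0]

/-- The vector `i k` with components `i k_j`. -/
def ikv (k : Fin 3 → ℝ) : Fin 3 → ℂ := fun j => Complex.I * (k j : ℂ)

/-!
After the velocities are scaled by `√(4πm)` and the magnetic field is rotated by the curl, every
transverse Fourier mode solves a skew-symmetric system in which only the currents are damped. Adding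
current–electric and electric–magnetic cross terms, weighted by `(1 + q²)⁻¹`, to the energy yields
one Lyapunov functional for all frequencies `q = |k|`. It decays at rate of order `q²` for `q ≤ 1`
and of order `q⁻²` for `q ≥ 1`.

For `q ≥ 1` this bounds the solution, and the Darcy profile decays by itself. For `q ≤ 1` the
deviation of currents and electric field from Darcy equilibrium with the actual magnetic field
solves the exponentially damped system at frequency zero, with a forcing of order `q² e^{-λq²t}`.
Hence the magnetic field solves the heat equation up to a small forcing, and Duhamel's formula
compares it with the heat flow of its initial value.
-/

open scoped InnerProductSpace InnerProduct

section Comparison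

theorem hasDerivAt_exp_const_mul (a t : ℝ) :
    HasDerivAt (fun s => rexp (a * s)) (rexp (a * t) * a) t := by
  simpa using ((hasDerivAt_id t).const_mul a).exp

theorem le_of_deriv_le_neg_mul_add_exp {Y Y' : ℝ → ℝ} {a b M : ℝ} (hM : 0 ≤ M)
    (hY : ∀ t, 0 ≤ t → HasDerivAt Y (Y' t) t)
    (hY' : ∀ t, 0 ≤ t → Y' t ≤ -a * Y t + (a - b) * M * rexp (-b * t)) {t : ℝ} (ht : 0 ≤ t) :
    Y t ≤ Y 0 * rexp (-a * t) + M * rexp (-b * t) := by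
  have hderiv : ∀ s, 0 ≤ s → HasDerivAt (fun s => rexp (a * s) * (Y s - M * rexp (-b * s)))
      (rexp (a * s) * (Y' s + a * Y s - (a - b) * M * rexp (-b * s))) s := fun s hs => by
    refine ((hasDerivAt_exp_const_mul a s).mul
      ((hY s hs).sub ((hasDerivAt_exp_const_mul (-b) s).const_mul M))).congr_deriv ?_
    simp only [Pi.sub_apply]
    ring
  have hanti : AntitoneOn (fun s => rexp (a * s) * (Y s - M * rexp (-b * s))) (Set.Ici 0) := by
    refine antitoneOn_of_hasDerivWithinAt_nonpos (convex_Ici 0)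
      (fun s hs => (hderiv s hs).continuousAt.continuousWithinAt)
      (fun s hs => (hderiv s (interior_subset hs)).hasDerivWithinAt) fun s hs => ?_
    exact mul_nonpos_of_nonneg_of_nonpos (Real.exp_pos _).le
      (by linarith [hY' s (interior_subset hs)])
  have hle := hanti Set.self_mem_Ici ht ht
  simp only [mul_zero, Real.exp_zero, one_mul, mul_one] at hle
  have hcancel : rexp (-a * t) * rexp (a * t) = 1 := by rw [← Real.exp_add]; simp
  calc Y t = rexp (-a * t) * (rexp (a * t) * (Y t - M * rexp (-b * t))) + M * rexp (-b * t) := by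
        rw [← mul_assoc, hcancel]; ring
    _ ≤ rexp (-a * t) * Y 0 + M * rexp (-b * t) := by gcongr; linarith
    _ = Y 0 * rexp (-a * t) + M * rexp (-b * t) := by ring

theorem norm_le_exp_mul_of_hasDerivAt_neg_smul_add {X : Type*} [NormedAddCommGroup X]
    [NormedSpace ℝ X] {f h : ℝ → X} {κ ρ a M D : ℝ} (hρ : ρ ≤ κ) (hM : 0 ≤ M) (hD : 0 ≤ D)
    (ha : 0 ≤ a) (hf : ∀ t, 0 ≤ t → HasDerivAt f (-κ • f t + h t) t)
    (hh : ∀ t, 0 ≤ t → ‖h t‖ ≤ rexp (-ρ * t) * (a * M * rexp (-a * t) + (κ - ρ) * D))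
    {t : ℝ} (ht : 0 ≤ t) :
    ‖f t‖ ≤ rexp (-ρ * t) * (‖f 0‖ + M + D) := by
  have hg : ∀ s, 0 ≤ s → HasDerivAt (fun s => rexp (κ * s) • f s) (rexp (κ * s) • h s) s := by
    intro s hs
    refine ((hasDerivAt_exp_const_mul κ s).smul (hf s hs)).congr_deriv ?_
    module
  let bound : ℝ → ℝ := fun s => rexp ((κ - ρ) * s) * (‖f 0‖ + M * (1 - rexp (-a * s)) + D)
  have hbound : ∀ s, HasDerivAt bound (rexp ((κ - ρ) * s) * ((κ - ρ) *
      (‖f 0‖ + M * (1 - rexp (-a * s)) + D) + a * M * rexp (-a * s))) s := fun s => by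
    refine ((hasDerivAt_exp_const_mul (κ - ρ) s).mul
      (((((hasDerivAt_exp_const_mul (-a) s).const_sub 1).const_mul M).const_add
        ‖f 0‖).add_const D)).congr_deriv ?_
    ring
  have hle : ‖rexp (κ * t) • f t‖ ≤ bound t := by
    refine image_norm_le_of_norm_deriv_right_le_deriv_boundary
      (fun s hs => (hg s hs.1).continuousAt.continuousWithinAt)
      (fun s hs => (hg s hs.1).hasDerivWithinAt) (by simp [bound, hD]) hbound ?_ ⟨ht, le_rfl⟩
    rintro s ⟨hs, -⟩
    have hdecay : rexp (-a * s) ≤ 1 := Real.exp_le_one_iff.2 (by nlinarith)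
    calc ‖rexp (κ * s) • h s‖ = rexp (κ * s) * ‖h s‖ := by
          rw [norm_smul, Real.norm_of_nonneg (Real.exp_pos _).le]
      _ ≤ rexp (κ * s) * (rexp (-ρ * s) * (a * M * rexp (-a * s) + (κ - ρ) * D)) := by
          gcongr; exact hh s hs
      _ = rexp ((κ - ρ) * s) * ((κ - ρ) * (0 + D) + a * M * rexp (-a * s)) := by
          rw [← mul_assoc, ← Real.exp_add]; ring_nf
      _ ≤ _ := by
          have : 0 ≤ ‖f 0‖ + M * (1 - rexp (-a * s)) :=
            add_nonneg (norm_nonneg _) (mul_nonneg hM (sub_nonneg.2 hdecay))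
          have := sub_nonneg.2 hρ
          gcongr
  calc ‖f t‖ = rexp (-κ * t) * ‖rexp (κ * t) • f t‖ := by
        rw [norm_smul, Real.norm_of_nonneg (Real.exp_pos _).le, ← mul_assoc, ← Real.exp_add]
        simp
    _ ≤ rexp (-κ * t) * bound t := by gcongr
    _ = rexp (-ρ * t) * (‖f 0‖ + M * (1 - rexp (-a * t)) + D) := by
        simp only [bound]; rw [← mul_assoc, ← Real.exp_add]; ring_nf
    _ ≤ rexp (-ρ * t) * (‖f 0‖ + M + D) := by
        gcongr
        exact mul_le_of_le_one_right hM (by linarith [Real.exp_pos (-a * t)])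

end Comparison

section LossWeight

/-- The weight `(1 + q²)⁻¹` which records the loss of regularity: at high frequency, damping is
transferred from the currents to the fields only with this strength. -/
noncomputable def lossWeight (q : ℝ) : ℝ := (1 + q ^ 2)⁻¹

theorem lossWeight_pos (q : ℝ) : 0 < lossWeight q := inv_pos.2 (by positivity)

theorem lossWeight_le_one (q : ℝ) : lossWeight q ≤ 1 :=
  inv_le_one_of_one_le₀ (by nlinarith [sq_nonneg q])

theorem lossWeight_mul_sq_le_one (q : ℝ) : lossWeight q * q ^ 2 ≤ 1 := by
  rw [lossWeight, inv_mul_le_one₀ (by positivity)]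
  linarith

theorem lossWeight_mul_abs_le_one (q : ℝ) : lossWeight q * |q| ≤ 1 := by
  rw [lossWeight, inv_mul_le_one₀ (by positivity)]
  nlinarith [sq_abs q, sq_nonneg (|q| - 1)]

theorem sq_div_four_le_sq_lossWeight_mul {q : ℝ} (hq : |q| ≤ 1) :
    q ^ 2 / 4 ≤ (lossWeight q * q) ^ 2 := by
  have hq₂ : q ^ 2 ≤ 1 := by simpa using hq
  have hhalf : 1 / 2 ≤ lossWeight q := by
    rw [lossWeight, one_div]; gcongr; linarith
  calc q ^ 2 / 4 = (1 / 2) ^ 2 * q ^ 2 := by ring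
    _ ≤ lossWeight q ^ 2 * q ^ 2 := by gcongr
    _ = (lossWeight q * q) ^ 2 := by ring

theorem inv_sq_div_four_le_sq_lossWeight_mul {q : ℝ} (hq : 1 ≤ |q|) :
    (q ^ 2)⁻¹ / 4 ≤ (lossWeight q * q) ^ 2 := by
  have hq₂ : 1 ≤ q ^ 2 := by simpa using hq
  have hhalf : (2 * q ^ 2)⁻¹ ≤ lossWeight q := by
    rw [lossWeight]; gcongr; linarith
  calc (q ^ 2)⁻¹ / 4 = (2 * q ^ 2)⁻¹ ^ 2 * q ^ 2 := by field_simp; ring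
    _ ≤ lossWeight q ^ 2 * q ^ 2 := by gcongr
    _ = (lossWeight q * q) ^ 2 := by ring

end LossWeight

section DampedMaxwell

variable {V W : Type*} [NormedAddCommGroup V] [NormedAddCommGroup W]

/-- The squared Hilbert norm of a state; the norm of the product type is the supremum norm. -/
noncomputable def energy (z : W × V × V) : ℝ := ‖z.1‖ ^ 2 + ‖z.2.1‖ ^ 2 + ‖z.2.2‖ ^ 2

theorem energy_nonneg (z : W × V × V) : 0 ≤ energy z := by unfold energy; positivity

theorem norm_currents_electric_le (z : W × V × V) : ‖(z.1, z.2.1)‖ ≤ √(energy z) := by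
  refine max_le ?_ ?_ <;> refine Real.le_sqrt_of_sq_le ?_ <;> rw [energy] <;> dsimp only <;>
    linarith [sq_nonneg ‖z.1‖, sq_nonneg ‖z.2.1‖, sq_nonneg ‖z.2.2‖]

variable [InnerProductSpace ℝ V] [InnerProductSpace ℝ W]

/-- The energy inner product modified by hypocoercive cross terms, of relative sizes `ε` and
`ε * θ`, which dissipate the electric and the magnetic field, respectively. -/
noncomputable def lyapunovForm (K : V →L[ℝ] W) (ε θ q : ℝ) (z z' : W × V × V) : ℝ :=
  ⟪z.1, z'.1⟫_ℝ + ⟪z.2.1, z'.2.1⟫_ℝ + ⟪z.2.2, z'.2.2⟫_ℝ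
    - ε * (lossWeight q * (⟪z.1, K z'.2.1⟫_ℝ + ⟪z'.1, K z.2.1⟫_ℝ)
      + θ * lossWeight q ^ 2 * q * (⟪z.2.1, z'.2.2⟫_ℝ + ⟪z'.2.1, z.2.2⟫_ℝ))

variable {K : V →L[ℝ] W} {N : W →L[ℝ] W} {c ε θ q ν κ : ℝ}

theorem lyapunovForm_add_right (z u f : W × V × V) :
    lyapunovForm K ε θ q z (u + f) = lyapunovForm K ε θ q z u + lyapunovForm K ε θ q z f := by
  simp only [lyapunovForm, Prod.fst_add, Prod.snd_add, inner_add_left, inner_add_right, map_add]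
  ring

theorem hasDerivAt_lyapunovForm_self {z : ℝ → W × V × V} {z' : W × V × V} {t : ℝ}
    (hz : HasDerivAt z z' t) :
    HasDerivAt (fun s => lyapunovForm K ε θ q (z s) (z s))
      (2 * lyapunovForm K ε θ q (z t) z') t := by
  have hw : HasDerivAt (fun s => (z s).1) z'.1 t := hz.fst
  have hE : HasDerivAt (fun s => (z s).2.1) z'.2.1 t := hz.snd.fst
  have hβ : HasDerivAt (fun s => (z s).2.2) z'.2.2 t := hz.snd.snd
  have hKE : HasDerivAt (fun s => K (z s).2.1) (K z'.2.1) t := K.hasFDerivAt.comp_hasDerivAt t hE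
  refine ((((hw.inner ℝ hw).add (hE.inner ℝ hE)).add (hβ.inner ℝ hβ)).sub
    (((((hw.inner ℝ hKE).add (hw.inner ℝ hKE)).const_mul (lossWeight q)).add
      (((hE.inner ℝ hβ).add (hE.inner ℝ hβ)).const_mul
        (θ * lossWeight q ^ 2 * q))).const_mul ε)).congr_deriv ?_
  simp only [lyapunovForm, real_inner_comm]
  ring

theorem abs_lyapunovForm_self_sub_energy_le (hε : 0 ≤ ε) (hθ : 0 ≤ θ) (z : W × V × V) :
    |lyapunovForm K ε θ q z z - energy z| ≤ ε * (‖K‖ + θ) * energy z := by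
  obtain ⟨w, E, β⟩ := z
  have hweight : |lossWeight q ^ 2 * q| ≤ 1 := by
    rw [abs_mul, abs_of_pos (pow_pos (lossWeight_pos q) 2), sq, mul_assoc]
    exact mul_le_one₀ (lossWeight_le_one q) (by have := lossWeight_pos q; positivity)
      (lossWeight_mul_abs_le_one q)
  have hcurrent : |lossWeight q * ⟪w, K E⟫_ℝ| ≤ ‖K‖ * (‖w‖ * ‖E‖) := by
    rw [abs_mul, abs_of_pos (lossWeight_pos q)]
    calc lossWeight q * |⟪w, K E⟫_ℝ| ≤ 1 * (‖w‖ * (‖K‖ * ‖E‖)) := by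
          gcongr
          · exact lossWeight_le_one q
          · exact (abs_real_inner_le_norm _ _).trans (by gcongr; exact K.le_opNorm E)
      _ = ‖K‖ * (‖w‖ * ‖E‖) := by ring
  have hfield : |lossWeight q ^ 2 * q * ⟪E, β⟫_ℝ| ≤ ‖E‖ * ‖β‖ := by
    rw [abs_mul]
    exact (mul_le_of_le_one_left (abs_nonneg _) hweight).trans (abs_real_inner_le_norm _ _)
  have hsplit : lyapunovForm K ε θ q (w, E, β) (w, E, β) - energy (w, E, β)
      = -(2 * ε * (lossWeight q * ⟪w, K E⟫_ℝ + θ * (lossWeight q ^ 2 * q * ⟪E, β⟫_ℝ))) := by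
    simp only [lyapunovForm, energy, real_inner_self_eq_norm_sq]
    ring
  have hwE := two_mul_le_add_sq ‖w‖ ‖E‖
  have hEβ := two_mul_le_add_sq ‖E‖ ‖β‖
  calc |lyapunovForm K ε θ q (w, E, β) (w, E, β) - energy (w, E, β)|
      = 2 * ε * |lossWeight q * ⟪w, K E⟫_ℝ + θ * (lossWeight q ^ 2 * q * ⟪E, β⟫_ℝ)| := by
        rw [hsplit, abs_neg, abs_mul, abs_of_nonneg (by positivity)]
    _ ≤ 2 * ε * (‖K‖ * (‖w‖ * ‖E‖) + θ * (‖E‖ * ‖β‖)) := by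
        gcongr
        refine (abs_add_le _ _).trans (add_le_add hcurrent ?_)
        rw [abs_mul, abs_of_nonneg hθ]
        gcongr
    _ = ε * (‖K‖ * (2 * ‖w‖ * ‖E‖) + θ * (2 * ‖E‖ * ‖β‖)) := by ring
    _ ≤ ε * (‖K‖ * energy (w, E, β) + θ * energy (w, E, β)) := by
        gcongr <;> simp only [energy] <;> linarith [sq_nonneg ‖w‖, sq_nonneg ‖β‖]
    _ = ε * (‖K‖ + θ) * energy (w, E, β) := by ring

theorem abs_inner_apply_le_young (K : V →L[ℝ] W) {a : ℝ} (ha : 0 < a) (w : W) (x : V) :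
    |⟪w, K x⟫_ℝ| ≤ a / 4 * ‖x‖ ^ 2 + a⁻¹ * (‖K‖ ^ 2 * ‖w‖ ^ 2) := by
  have hyoung := two_mul_le_add_mul_sq (a := ‖x‖) (b := ‖K‖ * ‖w‖) (half_pos ha)
  calc |⟪w, K x⟫_ℝ| ≤ ‖w‖ * (‖K‖ * ‖x‖) :=
        (abs_real_inner_le_norm _ _).trans (by gcongr; exact K.le_opNorm x)
    _ = 2 * ‖x‖ * (‖K‖ * ‖w‖) / 2 := by ring
    _ ≤ (a / 2 * ‖x‖ ^ 2 + (a / 2)⁻¹ * (‖K‖ * ‖w‖) ^ 2) / 2 := by gcongr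
    _ = a / 4 * ‖x‖ ^ 2 + a⁻¹ * (‖K‖ ^ 2 * ‖w‖ ^ 2) := by field_simp; ring

/-- The currents `q A β` and the electric field `σ q β` which the generalized Darcy law `(A, σ)`
assigns to the magnetic field `β` at frequency `q`. -/
noncomputable def darcyProfile (A : V →L[ℝ] W) (σ q : ℝ) (β : V) : W × V := (q • A β, (q * σ) • β)

theorem darcyProfile_sub (A : V →L[ℝ] W) (σ q : ℝ) (β β' : V) :
    darcyProfile A σ q (β - β') = darcyProfile A σ q β - darcyProfile A σ q β' := by
  simp [darcyProfile, smul_sub]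

theorem norm_darcyProfile_le (A : V →L[ℝ] W) (σ q : ℝ) (β : V) :
    ‖darcyProfile A σ q β‖ ≤ |q| * ((‖A‖ + |σ|) * ‖β‖) := by
  refine max_le ?_ ?_ <;> simp only [darcyProfile, norm_smul, Real.norm_eq_abs, abs_mul, mul_assoc]
  · gcongr
    linarith [A.le_opNorm β, mul_nonneg (abs_nonneg σ) (norm_nonneg β)]
  · gcongr
    linarith [norm_nonneg A]

/-- The deviation of the currents and of the electric field from Darcy equilibrium with the current
magnetic field, as a state without magnetic field. -/
noncomputable def darcyDefect (A : V →L[ℝ] W) (σ q : ℝ) (z : W × V × V) : W × V × V :=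
  (z.1 - (darcyProfile A σ q z.2.2).1, z.2.1 - (darcyProfile A σ q z.2.2).2, 0)

theorem energy_darcyDefect_le (A : V →L[ℝ] W) (σ : ℝ) (hq : |q| ≤ 1) (z : W × V × V) :
    energy (darcyDefect A σ q z) ≤ 2 * (1 + ‖A‖ ^ 2 + σ ^ 2) * energy z := by
  have hq₂ : q ^ 2 ≤ 1 := by simpa using hq
  have hA : ‖(darcyProfile A σ q z.2.2).1‖ ^ 2 ≤ ‖A‖ ^ 2 * ‖z.2.2‖ ^ 2 := by
    rw [darcyProfile, norm_smul, mul_pow, Real.norm_eq_abs, sq_abs, ← mul_pow ‖A‖]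
    exact (mul_le_of_le_one_left (sq_nonneg _) hq₂).trans (by gcongr; exact A.le_opNorm _)
  have hσ : ‖(darcyProfile A σ q z.2.2).2‖ ^ 2 ≤ σ ^ 2 * ‖z.2.2‖ ^ 2 := by
    rw [darcyProfile, norm_smul, mul_pow, Real.norm_eq_abs, sq_abs, mul_pow]
    gcongr
    exact mul_le_of_le_one_left (sq_nonneg σ) hq₂
  calc energy (darcyDefect A σ q z)
      ≤ 2 * (‖z.1‖ ^ 2 + ‖A‖ ^ 2 * ‖z.2.2‖ ^ 2) + 2 * (‖z.2.1‖ ^ 2 + σ ^ 2 * ‖z.2.2‖ ^ 2) + 0 := by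
        rw [energy]
        gcongr
        · exact (pow_le_pow_left₀ (norm_nonneg _) (norm_sub_le _ _) 2).trans
            (add_sq_le.trans (by gcongr))
        · exact (pow_le_pow_left₀ (norm_nonneg _) (norm_sub_le _ _) 2).trans
            (add_sq_le.trans (by gcongr))
        · simp [darcyDefect]
    _ = 2 * (‖z.1‖ ^ 2 + ‖z.2.1‖ ^ 2 + (‖A‖ ^ 2 + σ ^ 2) * ‖z.2.2‖ ^ 2) := by ring
    _ ≤ 2 * ((1 + ‖A‖ ^ 2 + σ ^ 2) * energy z) := by
        rw [energy]
        nlinarith [mul_nonneg (add_nonneg (sq_nonneg ‖A‖) (sq_nonneg σ))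
          (add_nonneg (sq_nonneg ‖z.1‖) (sq_nonneg ‖z.2.1‖)), sq_nonneg ‖z.2.2‖]
    _ = _ := by ring

theorem energy_smul_darcy_le (A : V →L[ℝ] W) (σ r : ℝ) (E : V) :
    energy (r • (A E, σ • E, (0 : V))) ≤ (1 + ‖A‖ ^ 2 + σ ^ 2) * r ^ 2 * ‖E‖ ^ 2 := by
  calc energy (r • (A E, σ • E, (0 : V))) = r ^ 2 * (‖A E‖ ^ 2 + σ ^ 2 * ‖E‖ ^ 2) := by
        simp only [energy, Prod.smul_mk, norm_smul, mul_pow, Real.norm_eq_abs, sq_abs, norm_zero]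
        ring
    _ ≤ r ^ 2 * (‖E‖ ^ 2 + ((‖A‖ * ‖E‖) ^ 2 + σ ^ 2 * ‖E‖ ^ 2)) := by
        refine mul_le_mul_of_nonneg_left ?_ (sq_nonneg r)
        linarith [pow_le_pow_left₀ (norm_nonneg _) (A.le_opNorm E) 2, sq_nonneg ‖E‖]
    _ = (1 + ‖A‖ ^ 2 + σ ^ 2) * r ^ 2 * ‖E‖ ^ 2 := by ring

variable [CompleteSpace V] [CompleteSpace W]

/-- The generator of the damped Maxwell system `w' = K E - N w`, `E' = c q β - K† w`,
`β' = -c q E` at frequency `q` for the state `(w, E, β)` of currents, electric field and (rotated)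
magnetic field. The currents are damped by `N` and coupled skew-symmetrically to `E` by `K`. -/
noncomputable def dampedMaxwell (K : V →L[ℝ] W) (N : W →L[ℝ] W) (c q : ℝ) (z : W × V × V) :
    W × V × V :=
  (K z.2.1 - N z.1, (c * q) • z.2.2 - (K†) z.1, -(c * q) • z.2.1)

theorem lyapunovForm_dampedMaxwell (z : W × V × V) :
    lyapunovForm K ε θ q z (dampedMaxwell K N c q z) = -⟪N z.1, z.1⟫_ℝ
      - ε * (lossWeight q * (‖K z.2.1‖ ^ 2 - ⟪N z.1, K z.2.1⟫_ℝ + c * q * ⟪z.1, K z.2.2⟫_ℝ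
          - ‖(K†) z.1‖ ^ 2)
        + θ * lossWeight q ^ 2 * q * (c * q * ‖z.2.2‖ ^ 2 - ⟪(K†) z.1, z.2.2⟫_ℝ
          - c * q * ‖z.2.1‖ ^ 2)) := by
  obtain ⟨w, E, β⟩ := z
  have hskew : ⟪E, (K†) w⟫_ℝ = ⟪w, K E⟫_ℝ := by
    rw [real_inner_comm, ContinuousLinearMap.adjoint_inner_left]
  have hadj : ⟪w, K ((K†) w)⟫_ℝ = ‖(K†) w‖ ^ 2 := by
    rw [← ContinuousLinearMap.adjoint_inner_left, real_inner_self_eq_norm_sq]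
  simp only [lyapunovForm, dampedMaxwell, inner_sub_left, inner_sub_right, real_inner_smul_left,
    real_inner_smul_right, map_sub, map_smul, hskew, hadj, real_inner_self_eq_norm_sq,
    real_inner_comm w (N w), real_inner_comm β E]
  ring

theorem le_current_electric_crossTerm (w : W) (E : V) :
    3 / 4 * (lossWeight q * ‖K E‖ ^ 2) - (‖N‖ ^ 2 + ‖K‖ ^ 2) * ‖w‖ ^ 2
      ≤ lossWeight q * (‖K E‖ ^ 2 - ⟪N w, K E⟫_ℝ - ‖(K†) w‖ ^ 2) := by
  have hω := lossWeight_pos q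
  have hω₁ := lossWeight_le_one q
  have hadj : ‖(K†) w‖ ≤ ‖K‖ * ‖w‖ := by
    simpa using (K†).le_opNorm w
  have hinner : ⟪N w, K E⟫_ℝ ≤ ‖N w‖ ^ 2 + ‖K E‖ ^ 2 / 4 :=
    (real_inner_le_norm _ _).trans (by linarith [two_mul_le_add_sq ‖N w‖ (‖K E‖ / 2)])
  have hdamping : lossWeight q * ‖N w‖ ^ 2 ≤ 1 * (‖N‖ * ‖w‖) ^ 2 := by
    gcongr; exact N.le_opNorm w
  have hback : lossWeight q * ‖(K†) w‖ ^ 2 ≤ 1 * (‖K‖ * ‖w‖) ^ 2 := by gcongr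
  linarith [mul_le_mul_of_nonneg_left hinner hω.le]

theorem le_electric_magnetic_crossTerm (hc : 0 < c) (hθ : 0 < θ) (hθκ : 4 * θ * c ≤ κ)
    (w : W) (E β : V) :
    θ * c / 2 * (lossWeight q * q * ‖β‖) ^ 2 - κ / 4 * (lossWeight q * ‖E‖ ^ 2)
        - (c * θ⁻¹ + θ * c⁻¹) * ‖K‖ ^ 2 * ‖w‖ ^ 2
      ≤ lossWeight q * (c * q * ⟪w, K β⟫_ℝ)
        + θ * lossWeight q ^ 2 * q * (c * q * ‖β‖ ^ 2 - ⟪(K†) w, β⟫_ℝ - c * q * ‖E‖ ^ 2) := by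
  set ω := lossWeight q
  have hω : 0 < ω := lossWeight_pos q
  have hyoung : ∀ a, 0 < a → |ω * q * ⟪w, K β⟫_ℝ|
      ≤ a / 4 * (ω * q * ‖β‖) ^ 2 + a⁻¹ * (‖K‖ ^ 2 * ‖w‖ ^ 2) := fun a ha => by
    have := abs_inner_apply_le_young K ha w ((ω * q) • β)
    rwa [map_smul, real_inner_smul_right, norm_smul, mul_pow, Real.norm_eq_abs, sq_abs,
      ← mul_pow] at this
  have hrotation := mul_le_mul_of_nonneg_left ((neg_le_abs _).trans (hyoung θ hθ)) hc.le
  have hcurrent : θ * (ω * (ω * q * ⟪(K†) w, β⟫_ℝ))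
      ≤ θ * (c / 4 * (ω * q * ‖β‖) ^ 2 + c⁻¹ * (‖K‖ ^ 2 * ‖w‖ ^ 2)) := by
    rw [ContinuousLinearMap.adjoint_inner_left]
    gcongr
    exact (mul_le_of_le_one_left (abs_nonneg _) (lossWeight_le_one q)).trans'
      (by gcongr; exact le_abs_self _) |>.trans (hyoung c hc)
  have helectric : θ * c * (ω * (ω * q ^ 2) * ‖E‖ ^ 2) ≤ κ / 4 * (ω * ‖E‖ ^ 2) :=
    calc θ * c * (ω * (ω * q ^ 2) * ‖E‖ ^ 2) ≤ θ * c * (ω * 1 * ‖E‖ ^ 2) := by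
          gcongr; exact lossWeight_mul_sq_le_one q
      _ = 4 * θ * c / 4 * (ω * ‖E‖ ^ 2) := by ring
      _ ≤ κ / 4 * (ω * ‖E‖ ^ 2) := by gcongr
  linarith

theorem le_hypocoercive_crossTerms (hc : 0 < c) (hθ : 0 < θ) (hθκ : 4 * θ * c ≤ κ)
    (hK : ∀ E, κ * ‖E‖ ^ 2 ≤ ‖K E‖ ^ 2) (w : W) (E β : V) :
    κ / 2 * (lossWeight q * ‖E‖ ^ 2) + θ * c / 2 * (lossWeight q * q * ‖β‖) ^ 2
        - (‖N‖ ^ 2 + (c * θ⁻¹ + 1 + θ * c⁻¹) * ‖K‖ ^ 2) * ‖w‖ ^ 2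
      ≤ lossWeight q * (‖K E‖ ^ 2 - ⟪N w, K E⟫_ℝ + c * q * ⟪w, K β⟫_ℝ - ‖(K†) w‖ ^ 2)
        + θ * lossWeight q ^ 2 * q * (c * q * ‖β‖ ^ 2 - ⟪(K†) w, β⟫_ℝ - c * q * ‖E‖ ^ 2) := by
  have hcoercive := mul_le_mul_of_nonneg_left (hK E) (lossWeight_pos q).le
  linarith [le_current_electric_crossTerm (K := K) (N := N) (q := q) w E,
    le_electric_magnetic_crossTerm (K := K) (q := q) hc hθ hθκ w E β]

theorem lyapunovForm_dampedMaxwell_le (hc : 0 < c) (hε : 0 ≤ ε) (hθ : 0 < θ)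
    (hθκ : 4 * θ * c ≤ κ) (hK : ∀ E, κ * ‖E‖ ^ 2 ≤ ‖K E‖ ^ 2)
    (hN : ∀ w, ν * ‖w‖ ^ 2 ≤ ⟪N w, w⟫_ℝ)
    (hεν : ε * (‖N‖ ^ 2 + (c * θ⁻¹ + 1 + θ * c⁻¹) * ‖K‖ ^ 2) ≤ ν / 2) (z : W × V × V) :
    lyapunovForm K ε θ q z (dampedMaxwell K N c q z)
      ≤ -(ν / 2 * ‖z.1‖ ^ 2 + ε * (κ / 2 * (lossWeight q * ‖z.2.1‖ ^ 2)
        + θ * c / 2 * (lossWeight q * q * ‖z.2.2‖) ^ 2)) := by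
  rw [lyapunovForm_dampedMaxwell]
  have hcross := mul_le_mul_of_nonneg_left
    (le_hypocoercive_crossTerms (N := N) (q := q) hc hθ hθκ hK z.1 z.2.1 z.2.2) hε
  have hsmall := mul_le_mul_of_nonneg_right hεν (sq_nonneg ‖z.1‖)
  linarith [hN z.1]

/-- The Lyapunov form is equivalent to the energy and dissipated by the damped Maxwell system, with
constants independent of the frequency `q`. The dissipation degenerates as `lossWeight` does. -/
structure IsUniformLyapunov (K : V →L[ℝ] W) (N : W →L[ℝ] W) (c ε θ l : ℝ) : Prop where
  pos : 0 < l
  energy_le : ∀ q z, energy z ≤ 2 * lyapunovForm K ε θ q z z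
  le_energy : ∀ q z, lyapunovForm K ε θ q z z ≤ 2 * energy z
  dissipation : ∀ q z, lyapunovForm K ε θ q z (dampedMaxwell K N c q z)
    ≤ -(l * (‖z.1‖ ^ 2 + lossWeight q * ‖z.2.1‖ ^ 2 + (lossWeight q * q * ‖z.2.2‖) ^ 2))

theorem exists_isUniformLyapunov (hc : 0 < c) (hν : 0 < ν) (hκ : 0 < κ)
    (hK : ∀ E, κ * ‖E‖ ^ 2 ≤ ‖K E‖ ^ 2) (hN : ∀ w, ν * ‖w‖ ^ 2 ≤ ⟪N w, w⟫_ℝ) :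
    ∃ ε θ l, IsUniformLyapunov K N c ε θ l := by
  obtain ⟨θ, hθ, hθκ⟩ : ∃ θ, 0 < θ ∧ 4 * θ * c ≤ κ :=
    ⟨κ / (4 * c), by positivity, by field_simp; exact le_rfl⟩
  set Γ := ‖N‖ ^ 2 + (c * θ⁻¹ + 1 + θ * c⁻¹) * ‖K‖ ^ 2
  have : 0 ≤ Γ := by positivity
  obtain ⟨ε, hε, hεK, hεΓ⟩ : ∃ ε, 0 < ε ∧ ε * (‖K‖ + θ) ≤ 1 / 2 ∧ ε * Γ ≤ ν / 2 := by
    refine ⟨min (1 / 2 / (‖K‖ + θ)) (ν / 2 / (Γ + 1)), by positivity, ?_, ?_⟩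
    · exact (le_div_iff₀ (by positivity)).1 (min_le_left _ _)
    · have := (le_div_iff₀ (by positivity)).1 (min_le_right (1 / 2 / (‖K‖ + θ)) (ν / 2 / (Γ + 1)))
      exact this.trans' (by gcongr; linarith)
  have hclose : ∀ q (z : W × V × V), |lyapunovForm K ε θ q z z - energy z| ≤ 1 / 2 * energy z :=
    fun q z => (abs_lyapunovForm_self_sub_energy_le hε.le hθ.le z).trans
      (mul_le_mul_of_nonneg_right hεK (energy_nonneg z))
  refine ⟨ε, θ, min (ν / 2) (min (ε * (κ / 2)) (ε * (θ * c / 2))), by positivity,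
    fun q z => by linarith [(abs_le.1 (hclose q z)).1],
    fun q z => by linarith [(abs_le.1 (hclose q z)).2, energy_nonneg z], fun q z => ?_⟩
  refine (lyapunovForm_dampedMaxwell_le hc hε.le hθ hθκ hK hN hεΓ z).trans (neg_le_neg ?_)
  have := lossWeight_pos q
  rw [mul_add, mul_add, mul_add, ← mul_assoc ε, ← mul_assoc ε, ← add_assoc]
  gcongr
  · exact min_le_left _ _
  · exact (min_le_right _ _).trans (min_le_left _ _)
  · exact (min_le_right _ _).trans (min_le_right _ _)

namespace IsUniformLyapunov

variable {l : ℝ}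

theorem energy_le_exp_mul (h : IsUniformLyapunov K N c ε θ l) {z : ℝ → W × V × V}
    (hz : ∀ t, 0 ≤ t → HasDerivAt z (dampedMaxwell K N c q (z t)) t) {t : ℝ} (ht : 0 ≤ t) :
    energy (z t) ≤ 4 * energy (z 0) * rexp (-(l * (lossWeight q * q) ^ 2) * t) := by
  have hω := lossWeight_pos q
  have hrate : (lossWeight q * q) ^ 2 ≤ lossWeight q := by
    calc (lossWeight q * q) ^ 2 = lossWeight q * (lossWeight q * q ^ 2) := by ring
      _ ≤ lossWeight q * 1 := by gcongr; exact lossWeight_mul_sq_le_one q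
      _ = lossWeight q := mul_one _
  have hdecay : ∀ s, 0 ≤ s →
      2 * lyapunovForm K ε θ q (z s) (dampedMaxwell K N c q (z s))
        ≤ -(l * (lossWeight q * q) ^ 2) * lyapunovForm K ε θ q (z s) (z s)
          + (l * (lossWeight q * q) ^ 2 - 0) * 0 * rexp (-0 * s) := by
    intro s _
    have hle : (lossWeight q * q) ^ 2 * energy (z s) ≤ ‖(z s).1‖ ^ 2
        + lossWeight q * ‖(z s).2.1‖ ^ 2 + (lossWeight q * q * ‖(z s).2.2‖) ^ 2 := by
      rw [energy, mul_add, mul_add, mul_pow (lossWeight q * q) ‖_‖]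
      gcongr
      exact mul_le_of_le_one_left (by positivity) (hrate.trans (lossWeight_le_one q))
    have hform := mul_le_mul_of_nonneg_left (h.le_energy q (z s))
      (mul_nonneg h.pos.le (sq_nonneg (lossWeight q * q)))
    linarith [h.dissipation q (z s), mul_le_mul_of_nonneg_left hle h.pos.le]
  have := le_of_deriv_le_neg_mul_add_exp le_rfl
    (fun s hs => hasDerivAt_lyapunovForm_self (hz s hs)) hdecay ht
  calc energy (z t) ≤ 2 * lyapunovForm K ε θ q (z t) (z t) := h.energy_le q _
    _ ≤ 2 * (2 * energy (z 0) * rexp (-(l * (lossWeight q * q) ^ 2) * t)) := by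
        gcongr
        rw [zero_mul, add_zero] at this
        exact this.trans (by gcongr; exact h.le_energy q _)
    _ = _ := by ring

theorem energy_le_exp_mul_of_abs_le_one (h : IsUniformLyapunov K N c ε θ l)
    {z : ℝ → W × V × V} (hq : |q| ≤ 1)
    (hz : ∀ t, 0 ≤ t → HasDerivAt z (dampedMaxwell K N c q (z t)) t) {t : ℝ} (ht : 0 ≤ t) :
    energy (z t) ≤ 4 * energy (z 0) * rexp (-(l * (q ^ 2 / 4)) * t) := by
  have := h.pos
  have := energy_nonneg (z 0)
  exact (h.energy_le_exp_mul hz ht).trans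
    (by gcongr; exact sq_div_four_le_sq_lossWeight_mul hq)

theorem energy_le_exp_mul_of_one_le_abs (h : IsUniformLyapunov K N c ε θ l)
    {z : ℝ → W × V × V} (hq : 1 ≤ |q|)
    (hz : ∀ t, 0 ≤ t → HasDerivAt z (dampedMaxwell K N c q (z t)) t) {t : ℝ} (ht : 0 ≤ t) :
    energy (z t) ≤ 4 * energy (z 0) * rexp (-(l * ((q ^ 2)⁻¹ / 4)) * t) := by
  have := h.pos
  have := energy_nonneg (z 0)
  exact (h.energy_le_exp_mul hz ht).trans
    (by gcongr; exact inv_sq_div_four_le_sq_lossWeight_mul hq)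

theorem two_mul_lyapunovForm_le (h : IsUniformLyapunov K N c ε θ l) {a : ℝ} (ha : 0 < a)
    (z f : W × V × V) :
    2 * lyapunovForm K ε θ q z f
      ≤ a * lyapunovForm K ε θ q z z + a⁻¹ * lyapunovForm K ε θ q f f := by
  have hnonneg : 0 ≤ lyapunovForm K ε θ q (a • z - f) (a • z - f) := by
    linarith [h.energy_le q (a • z - f), energy_nonneg (a • z - f)]
  have hexpand : lyapunovForm K ε θ q (a • z - f) (a • z - f)
      = a * (a * lyapunovForm K ε θ q z z + a⁻¹ * lyapunovForm K ε θ q f f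
        - 2 * lyapunovForm K ε θ q z f) := by
    simp only [lyapunovForm, Prod.fst_sub, Prod.snd_sub, Prod.smul_fst, Prod.smul_snd,
      inner_sub_left, inner_sub_right, real_inner_smul_left, real_inner_smul_right, map_sub,
      map_smul, real_inner_comm f.1 z.1, real_inner_comm f.2.1 z.2.1, real_inner_comm f.2.2 z.2.2]
    field_simp
    ring
  rw [hexpand] at hnonneg
  linarith [nonneg_of_mul_nonneg_right hnonneg ha]

theorem energy_le_of_forced (h : IsUniformLyapunov K N c ε θ l) {x f : ℝ → W × V × V}
    {M ρ : ℝ} (hM : 0 ≤ M) (hρ : ρ ≤ l / 4)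
    (hx : ∀ t, 0 ≤ t → HasDerivAt x (dampedMaxwell K N c 0 (x t) + f t) t)
    (hx₀ : ∀ t, 0 ≤ t → (x t).2.2 = 0)
    (hf : ∀ t, 0 ≤ t → energy (f t) ≤ M * rexp (-ρ * t)) {t : ℝ} (ht : 0 ≤ t) :
    energy (x t) ≤ 4 * energy (x 0) * rexp (-(l / 2) * t) + 32 / l ^ 2 * M * rexp (-ρ * t) := by
  have hl := h.pos
  have hdecay : ∀ s, 0 ≤ s →
      2 * lyapunovForm K ε θ 0 (x s) (dampedMaxwell K N c 0 (x s) + f s)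
        ≤ -(l / 2) * lyapunovForm K ε θ 0 (x s) (x s)
          + (l / 2 - ρ) * (16 / l ^ 2 * M) * rexp (-ρ * s) := by
    intro s hs
    have hdiss : lyapunovForm K ε θ 0 (x s) (dampedMaxwell K N c 0 (x s)) ≤ -(l * energy (x s)) :=
      by simpa [lossWeight, energy, hx₀ s hs] using h.dissipation 0 (x s)
    have hforce : (l / 2)⁻¹ * lyapunovForm K ε θ 0 (f s) (f s)
        ≤ (l / 2 - ρ) * (16 / l ^ 2 * M) * rexp (-ρ * s) :=
      calc _ ≤ (l / 2)⁻¹ * (2 * (M * rexp (-ρ * s))) := by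
            gcongr; exact (h.le_energy 0 _).trans (by gcongr; exact hf s hs)
        _ = l / 4 * (16 / l ^ 2 * M) * rexp (-ρ * s) := by field_simp; ring
        _ ≤ _ := by gcongr; linarith
    rw [lyapunovForm_add_right]
    linarith [h.two_mul_lyapunovForm_le (q := 0) (half_pos hl) (x s) (f s),
      mul_le_mul_of_nonneg_left (h.le_energy 0 (x s)) hl.le]
  have := le_of_deriv_le_neg_mul_add_exp (by positivity)
    (fun s hs => hasDerivAt_lyapunovForm_self (hx s hs)) hdecay ht
  calc energy (x t) ≤ 2 * lyapunovForm K ε θ 0 (x t) (x t) := h.energy_le 0 _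
    _ ≤ 2 * (2 * energy (x 0) * rexp (-(l / 2) * t) + 16 / l ^ 2 * M * rexp (-ρ * t)) := by
        gcongr
        exact this.trans (by gcongr; exact h.le_energy 0 _)
    _ = _ := by ring

end IsUniformLyapunov

/-- `(A, σ)` is the generalized Darcy law of the damped Maxwell system: the currents `q A β` and the
electric field `σ q β` are in equilibrium with the magnetic field `β` at frequency `q`. -/
structure IsDarcyLaw (K : V →L[ℝ] W) (N : W →L[ℝ] W) (c : ℝ) (A : V →L[ℝ] W) (σ : ℝ) : Prop where
  pos : 0 < σ
  damping_apply : ∀ x, N (A x) = σ • K x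
  adjoint_apply : ∀ x, (K†) (A x) = c • x

variable {A : V →L[ℝ] W} {σ l : ℝ}

namespace IsDarcyLaw

theorem hasDerivAt_darcyDefect (hA : IsDarcyLaw K N c A σ) {z : ℝ → W × V × V} {t : ℝ}
    (hz : HasDerivAt z (dampedMaxwell K N c q (z t)) t) :
    HasDerivAt (fun s => darcyDefect A σ q (z s))
      (dampedMaxwell K N c 0 (darcyDefect A σ q (z t))
        + (c * q ^ 2) • (A (z t).2.1, σ • (z t).2.1, 0)) t := by
  have hw : HasDerivAt (fun s => (z s).1) (K (z t).2.1 - N (z t).1) t := hz.fst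
  have hE : HasDerivAt (fun s => (z s).2.1) ((c * q) • (z t).2.2 - (K†) (z t).1) t := hz.snd.fst
  have hβ : HasDerivAt (fun s => (z s).2.2) (-(c * q) • (z t).2.1) t := hz.snd.snd
  have hAβ : HasDerivAt (fun s => A (z s).2.2) (A (-(c * q) • (z t).2.1)) t :=
    A.hasFDerivAt.comp_hasDerivAt t hβ
  have hdefect := (hw.sub (hAβ.const_smul q)).prodMk
    ((hE.sub (hβ.const_smul (q * σ))).prodMk (hasDerivAt_const t (0 : V)))
  refine HasDerivAt.congr_deriv hdefect ?_
  ext <;> simp [dampedMaxwell, darcyDefect, darcyProfile, hA.damping_apply, hA.adjoint_apply]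
    <;> module

theorem energy_darcyDefect_le_exp (hA : IsDarcyLaw K N c A σ)
    (h : IsUniformLyapunov K N c ε θ l) {z : ℝ → W × V × V} (hq : |q| ≤ 1)
    (hz : ∀ t, 0 ≤ t → HasDerivAt z (dampedMaxwell K N c q (z t)) t) {t : ℝ} (ht : 0 ≤ t) :
    energy (darcyDefect A σ q (z t)) ≤ 8 * (1 + ‖A‖ ^ 2 + σ ^ 2) * (rexp (-(l / 2) * t)
      + 16 * c ^ 2 / l ^ 2 * (q ^ 2) ^ 2 * rexp (-(l * (q ^ 2 / 4)) * t)) * energy (z 0) := by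
  have hl := h.pos
  have hE₀ := energy_nonneg (z 0)
  set a := 1 + ‖A‖ ^ 2 + σ ^ 2
  have : 0 ≤ a := by positivity
  have hforce : ∀ s, 0 ≤ s → energy ((c * q ^ 2) • (A (z s).2.1, σ • (z s).2.1, (0 : V)))
      ≤ 4 * a * (c * q ^ 2) ^ 2 * energy (z 0) * rexp (-(l * (q ^ 2 / 4)) * s) := by
    intro s hs
    have hfield : ‖(z s).2.1‖ ^ 2 ≤ energy (z s) := by
      rw [energy]; linarith [sq_nonneg ‖(z s).1‖, sq_nonneg ‖(z s).2.2‖]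
    calc _ ≤ a * (c * q ^ 2) ^ 2 * ‖(z s).2.1‖ ^ 2 := energy_smul_darcy_le A σ _ _
      _ ≤ a * (c * q ^ 2) ^ 2 * (4 * energy (z 0) * rexp (-(l * (q ^ 2 / 4)) * s)) := by
          gcongr
          exact hfield.trans (h.energy_le_exp_mul_of_abs_le_one hq hz hs)
      _ = _ := by ring
  calc energy (darcyDefect A σ q (z t))
      ≤ 4 * energy (darcyDefect A σ q (z 0)) * rexp (-(l / 2) * t)
        + 32 / l ^ 2 * (4 * a * (c * q ^ 2) ^ 2 * energy (z 0))
          * rexp (-(l * (q ^ 2 / 4)) * t) :=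
        h.energy_le_of_forced (by positivity) (by nlinarith [(sq_le_one_iff_abs_le_one q).2 hq])
          (fun s hs => hA.hasDerivAt_darcyDefect (hz s hs)) (fun _ _ => rfl) hforce ht
    _ ≤ 4 * (2 * a * energy (z 0)) * rexp (-(l / 2) * t)
        + 32 / l ^ 2 * (4 * a * (c * q ^ 2) ^ 2 * energy (z 0))
          * rexp (-(l * (q ^ 2 / 4)) * t) := by
        gcongr
        exact energy_darcyDefect_le A σ hq (z 0)
    _ = _ := by ring

theorem exists_sqrt_energy_darcyDefect_le (hA : IsDarcyLaw K N c A σ)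
    (h : IsUniformLyapunov K N c ε θ l) :
    ∃ G, 0 ≤ G ∧ ∀ (q : ℝ) (z : ℝ → W × V × V), |q| ≤ 1 →
      (∀ t, 0 ≤ t → HasDerivAt z (dampedMaxwell K N c q (z t)) t) → ∀ t, 0 ≤ t →
        √(energy (darcyDefect A σ q (z t))) ≤
          G * (rexp (-(l / 4) * t) + q ^ 2 * rexp (-(l * q ^ 2 / 8) * t)) * √(energy (z 0)) := by
  set r := 16 * c ^ 2 / l ^ 2
  have hr : 0 ≤ r := by positivity
  set s := 8 * (1 + ‖A‖ ^ 2 + σ ^ 2)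
  have : 0 ≤ s := by positivity
  refine ⟨√(s * (1 + r)), Real.sqrt_nonneg _, fun q z hq hz t ht => ?_⟩
  have hE₀ := energy_nonneg (z 0)
  refine Real.sqrt_le_iff.2 ⟨by positivity, (hA.energy_darcyDefect_le_exp h hq hz ht).trans ?_⟩
  rw [mul_pow, Real.sq_sqrt hE₀, mul_pow, Real.sq_sqrt (by positivity)]
  set e₁ := rexp (-(l / 4) * t)
  set e₂ := rexp (-(l * q ^ 2 / 8) * t)
  have he₁ : rexp (-(l / 2) * t) = e₁ ^ 2 := by rw [← Real.exp_nat_mul]; ring_nf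
  have he₂ : rexp (-(l * (q ^ 2 / 4)) * t) = e₂ ^ 2 := by rw [← Real.exp_nat_mul]; ring_nf
  have hcross : 0 ≤ e₁ * (q ^ 2 * e₂) := by positivity
  have hsum : e₁ ^ 2 + r * (q ^ 2) ^ 2 * e₂ ^ 2 ≤ (1 + r) * (e₁ + q ^ 2 * e₂) ^ 2 := by
    nlinarith [mul_nonneg hr hcross, mul_nonneg hr (sq_nonneg e₁), sq_nonneg (q ^ 2 * e₂)]
  rw [he₁, he₂, mul_assoc s (1 + r)]
  gcongr

end IsDarcyLaw

theorem hasDerivAt_magnetic_sub_heat (A : V →L[ℝ] W) (σ : ℝ) {z : ℝ → W × V × V} {t : ℝ}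
    (hz : HasDerivAt z (dampedMaxwell K N c q (z t)) t) :
    HasDerivAt (fun s => (z s).2.2 - rexp (-(c * σ * q ^ 2) * s) • (z 0).2.2)
      (-(c * σ * q ^ 2) • ((z t).2.2 - rexp (-(c * σ * q ^ 2) * t) • (z 0).2.2)
        + -(c * q) • (darcyDefect A σ q (z t)).2.1) t := by
  have hβ : HasDerivAt (fun s => (z s).2.2) (-(c * q) • (z t).2.1) t := hz.snd.snd
  refine HasDerivAt.congr_deriv
    (hβ.sub ((hasDerivAt_exp_const_mul (-(c * σ * q ^ 2)) t).smul_const (z 0).2.2)) ?_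
  simp only [darcyDefect, darcyProfile]
  module

namespace IsDarcyLaw

theorem exists_norm_magnetic_sub_heat_le (hA : IsDarcyLaw K N c A σ)
    (h : IsUniformLyapunov K N c ε θ l) (hc : 0 < c) {lam : ℝ} (hlaml : lam ≤ l / 8)
    (hlamσ : lam ≤ c * σ / 2) :
    ∃ D, 0 ≤ D ∧ ∀ (q : ℝ) (z : ℝ → W × V × V), |q| ≤ 1 →
      (∀ t, 0 ≤ t → HasDerivAt z (dampedMaxwell K N c q (z t)) t) → ∀ t, 0 ≤ t →
        ‖(z t).2.2 - rexp (-(c * σ * q ^ 2) * t) • (z 0).2.2‖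
          ≤ |q| * D * rexp (-(lam * q ^ 2) * t) * √(energy (z 0)) := by
  obtain ⟨G, hG, hdefect⟩ := hA.exists_sqrt_energy_darcyDefect_le h
  have hl := h.pos
  have hσ := hA.pos
  refine ⟨8 * c * G / l + 2 * G / σ, by positivity, fun q z hq hz t ht => ?_⟩
  set n := √(energy (z 0))
  have hforce : ∀ s, 0 ≤ s → ‖-(c * q) • (darcyDefect A σ q (z s)).2.1‖
      ≤ rexp (-(lam * q ^ 2) * s) * (l / 8 * (8 * c * G / l * |q| * n) * rexp (-(l / 8) * s)
        + (c * σ * q ^ 2 - lam * q ^ 2) * (2 * G / σ * |q| * n)) := by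
    intro s hs
    have hfast : rexp (-(l / 4) * s) ≤ rexp (-(lam * q ^ 2) * s) * rexp (-(l / 8) * s) := by
      rw [← Real.exp_add, ← add_mul]
      gcongr
      nlinarith [sq_nonneg q, (sq_le_one_iff_abs_le_one q).2 hq]
    have hslow : rexp (-(l * q ^ 2 / 8) * s) ≤ rexp (-(lam * q ^ 2) * s) := by
      gcongr
      nlinarith [sq_nonneg q]
    calc ‖-(c * q) • (darcyDefect A σ q (z s)).2.1‖
        ≤ c * |q| * √(energy (darcyDefect A σ q (z s))) := by
          rw [norm_smul, norm_neg, norm_mul, Real.norm_of_nonneg hc.le, Real.norm_eq_abs]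
          gcongr
          exact (le_max_right _ _).trans (norm_currents_electric_le (darcyDefect A σ q (z s)))
      _ ≤ c * |q| * (G * (rexp (-(lam * q ^ 2) * s) * rexp (-(l / 8) * s)
            + q ^ 2 * rexp (-(lam * q ^ 2) * s)) * n) := by
          gcongr
          exact (hdefect q z hq hz s hs).trans (by gcongr)
      _ = rexp (-(lam * q ^ 2) * s) * (l / 8 * (8 * c * G / l * |q| * n) * rexp (-(l / 8) * s)
            + c * σ / 2 * q ^ 2 * (2 * G / σ * |q| * n)) := by field_simp
      _ ≤ _ := by gcongr; nlinarith [sq_nonneg q]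
  have := norm_le_exp_mul_of_hasDerivAt_neg_smul_add
    (by nlinarith [sq_nonneg q, mul_pos hc hσ] : lam * q ^ 2 ≤ c * σ * q ^ 2)
    (by positivity) (by positivity) (by positivity)
    (fun s hs => hasDerivAt_magnetic_sub_heat A σ (hz s hs)) hforce ht
  simp only [mul_zero, Real.exp_zero, one_smul, sub_self, norm_zero, zero_add] at this
  exact this.trans_eq (by ring)

theorem exists_norm_currents_electric_sub_heat_le_of_abs_le_one (hA : IsDarcyLaw K N c A σ)
    (hc : 0 < c) (h : IsUniformLyapunov K N c ε θ l) {lam : ℝ}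
    (hlaml : lam ≤ l / 8) (hlamσ : lam ≤ c * σ / 2) :
    ∃ C, 0 ≤ C ∧ ∀ (q : ℝ) (z : ℝ → W × V × V), |q| ≤ 1 →
      (∀ t, 0 ≤ t → HasDerivAt z (dampedMaxwell K N c q (z t)) t) → ∀ t, 0 ≤ t →
        ‖((z t).1, (z t).2.1) - darcyProfile A σ q (rexp (-(c * σ * q ^ 2) * t) • (z 0).2.2)‖
          ≤ C * (q ^ 2 * rexp (-(lam * q ^ 2 * t)) + rexp (-(lam * t))) * √(energy (z 0)) := by
  obtain ⟨G, hG, hdefect⟩ := hA.exists_sqrt_energy_darcyDefect_le h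
  obtain ⟨D, hD, hmagnetic⟩ := hA.exists_norm_magnetic_sub_heat_le h hc hlaml hlamσ
  refine ⟨G + (‖A‖ + |σ|) * D, by positivity, fun q z hq hz t ht => ?_⟩
  have hl := h.pos
  set n := √(energy (z 0))
  set βbar := rexp (-(c * σ * q ^ 2) * t) • (z 0).2.2
  have hsplit : ((z t).1, (z t).2.1) - darcyProfile A σ q βbar
      = ((darcyDefect A σ q (z t)).1, (darcyDefect A σ q (z t)).2.1)
        + darcyProfile A σ q ((z t).2.2 - βbar) := by
    rw [darcyProfile_sub, darcyDefect]
    exact (sub_add_sub_cancel _ (darcyProfile A σ q (z t).2.2) _).symm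
  have hfast : rexp (-(l / 4) * t) ≤ rexp (-(lam * t)) := by
    rw [← neg_mul]; gcongr; linarith
  have hslow : rexp (-(l * q ^ 2 / 8) * t) ≤ rexp (-(lam * q ^ 2 * t)) := by
    rw [← neg_mul]; gcongr; nlinarith [sq_nonneg q]
  calc ‖((z t).1, (z t).2.1) - darcyProfile A σ q βbar‖
      ≤ √(energy (darcyDefect A σ q (z t))) + ‖darcyProfile A σ q ((z t).2.2 - βbar)‖ := by
        rw [hsplit]
        exact (norm_add_le _ _).trans
          (add_le_add_left (norm_currents_electric_le (darcyDefect A σ q (z t))) _)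
    _ ≤ G * (q ^ 2 * rexp (-(lam * q ^ 2 * t)) + rexp (-(lam * t))) * n
        + |q| * ((‖A‖ + |σ|) * (|q| * D * rexp (-(lam * q ^ 2) * t) * n)) := by
        refine add_le_add ((hdefect q z hq hz t ht).trans ?_)
          ((norm_darcyProfile_le A σ q _).trans (by gcongr; exact hmagnetic q z hq hz t ht))
        rw [add_comm (rexp _)]
        gcongr
    _ = G * (q ^ 2 * rexp (-(lam * q ^ 2 * t)) + rexp (-(lam * t))) * n
        + (‖A‖ + |σ|) * D * (q ^ 2 * rexp (-(lam * q ^ 2 * t))) * n := by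
        rw [← sq_abs q, neg_mul]; ring
    _ ≤ (G + (‖A‖ + |σ|) * D)
        * (q ^ 2 * rexp (-(lam * q ^ 2 * t)) + rexp (-(lam * t))) * n := by
        rw [add_mul G, add_mul (G * _)]
        gcongr
        exact le_add_of_nonneg_right (Real.exp_pos _).le

end IsDarcyLaw

theorem norm_currents_electric_sub_heat_le_of_one_le_abs (A : V →L[ℝ] W) (σ : ℝ)
    (h : IsUniformLyapunov K N c ε θ l) {z : ℝ → W × V × V} (hq : 1 ≤ |q|)
    (hz : ∀ t, 0 ≤ t → HasDerivAt z (dampedMaxwell K N c q (z t)) t) {t : ℝ} (ht : 0 ≤ t) :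
    ‖((z t).1, (z t).2.1) - darcyProfile A σ q (rexp (-(c * σ * q ^ 2) * t) • (z 0).2.2)‖
      ≤ 2 * rexp (-(l / 8) * (q ^ 2)⁻¹ * t) * √(energy (z 0))
        + (‖A‖ + |σ|) * rexp (-(c * σ * q ^ 2) * t) * |q| * ‖(z 0).2.2‖ := by
  have hstate : ‖((z t).1, (z t).2.1)‖ ≤ 2 * rexp (-(l / 8) * (q ^ 2)⁻¹ * t) * √(energy (z 0)) := by
    refine (norm_currents_electric_le _).trans (Real.sqrt_le_iff.2 ⟨by positivity, ?_⟩)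
    refine (h.energy_le_exp_mul_of_one_le_abs hq hz ht).trans_eq ?_
    rw [mul_pow, mul_pow, Real.sq_sqrt (energy_nonneg _), ← Real.exp_nat_mul]
    ring_nf
  refine (norm_sub_le _ _).trans (add_le_add hstate ((norm_darcyProfile_le A σ q _).trans_eq ?_))
  rw [norm_smul, Real.norm_of_nonneg (Real.exp_pos _).le]
  ring

/-- The error `x` at time `t` and frequency `q` obeys the decay estimates of the diffusive Darcy
approximation, with constants `C` and `lam`, for data of size `U` and magnetic data of size `b`. -/
def DarcyErrorBound (C lam q t U b x : ℝ) : Prop :=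
  (|q| ≤ 1 → x ≤ C * (q ^ 2 * rexp (-(lam * q ^ 2 * t)) + rexp (-(lam * t))) * U) ∧
  (1 ≤ |q| → x ≤ C * rexp (-(lam * (q ^ 2)⁻¹ * t)) * U + C * rexp (-(lam * q ^ 2 * t)) * |q| * b)

theorem DarcyErrorBound.of_le_mul {C lam q t U U' b b' x y P M : ℝ}
    (h : DarcyErrorBound C lam q t U b y) (hC : 0 ≤ C) (hP : 0 ≤ P)
    (hxy : x ≤ P * y) (hU : U ≤ M * U') (hb : b ≤ M * b') :
    DarcyErrorBound (P * C * M) lam q t U' b' x := by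
  refine ⟨fun hq => ?_, fun hq => ?_⟩
  · calc x ≤ P * (C * (q ^ 2 * rexp (-(lam * q ^ 2 * t)) + rexp (-(lam * t))) * (M * U')) :=
          hxy.trans (by gcongr; exact (h.1 hq).trans (by gcongr))
      _ = _ := by ring
  · calc x ≤ P * (C * rexp (-(lam * (q ^ 2)⁻¹ * t)) * (M * U')
            + C * rexp (-(lam * q ^ 2 * t)) * |q| * (M * b')) :=
          hxy.trans (by gcongr; exact (h.2 hq).trans (by gcongr))
      _ = _ := by ring

theorem IsDarcyLaw.exists_darcyErrorBound (hA : IsDarcyLaw K N c A σ) (hc : 0 < c)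
    (hν : 0 < ν) (hκ : 0 < κ) (hK : ∀ E, κ * ‖E‖ ^ 2 ≤ ‖K E‖ ^ 2)
    (hN : ∀ w, ν * ‖w‖ ^ 2 ≤ ⟪N w, w⟫_ℝ) :
    ∃ C lam, 0 < C ∧ 0 < lam ∧ ∀ (q : ℝ) (z : ℝ → W × V × V),
      (∀ t, 0 ≤ t → HasDerivAt z (dampedMaxwell K N c q (z t)) t) → ∀ t, 0 ≤ t →
        DarcyErrorBound C lam q t (√(energy (z 0))) ‖(z 0).2.2‖
          ‖((z t).1, (z t).2.1)
            - darcyProfile A σ q (rexp (-(c * σ * q ^ 2) * t) • (z 0).2.2)‖ := by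
  obtain ⟨ε, θ, l, h⟩ := exists_isUniformLyapunov hc hν hκ hK hN
  have hl := h.pos
  have hcσ := mul_pos hc hA.pos
  set lam := min (l / 8) (c * σ / 2)
  have hlaml : lam ≤ l / 8 := min_le_left _ _
  have hlamσ : lam ≤ c * σ / 2 := min_le_right _ _
  obtain ⟨C, hC, hlow⟩ :=
    hA.exists_norm_currents_electric_sub_heat_le_of_abs_le_one hc h hlaml hlamσ
  refine ⟨C + 2 + (‖A‖ + |σ|), lam, by positivity, by positivity, fun q z hz t ht =>
    ⟨fun hq => (hlow q z hq hz t ht).trans ?_, fun hq =>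
      (norm_currents_electric_sub_heat_le_of_one_le_abs A σ h hq hz ht).trans ?_⟩⟩
  · gcongr
    linarith [norm_nonneg A, abs_nonneg σ]
  · have hslow : rexp (-(l / 8) * (q ^ 2)⁻¹ * t) ≤ rexp (-(lam * (q ^ 2)⁻¹ * t)) := by
      rw [neg_mul, neg_mul]; gcongr
    have hheat : rexp (-(c * σ * q ^ 2) * t) ≤ rexp (-(lam * q ^ 2 * t)) := by
      rw [neg_mul]; gcongr; linarith
    have hprofile : ‖A‖ + |σ| ≤ C + 2 + (‖A‖ + |σ|) := by linarith
    gcongr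
    linarith [norm_nonneg A, abs_nonneg σ]

end DampedMaxwell

section Multispecies

variable {ι V : Type*} [NormedAddCommGroup V] [InnerProductSpace ℝ V]

/-- The map `x ↦ (a j • x)_j` which couples a field with all species. -/
noncomputable def fanOut (V : Type*) [NormedAddCommGroup V] [InnerProductSpace ℝ V] (a : ι → ℝ) :
    V →L[ℝ] PiLp 2 fun _ : ι => V :=
  (PiLp.continuousLinearEquiv 2 ℝ fun _ : ι => V).symm ∘L
    ContinuousLinearMap.pi fun j => a j • ContinuousLinearMap.id ℝ V

/-- The map `w ↦ (a j • w j)_j`. -/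
noncomputable def coordinateScaling (V : Type*) [NormedAddCommGroup V] [InnerProductSpace ℝ V]
    (a : ι → ℝ) : (PiLp 2 fun _ : ι => V) →L[ℝ] PiLp 2 fun _ : ι => V :=
  (PiLp.continuousLinearEquiv 2 ℝ fun _ : ι => V).symm ∘L
    ContinuousLinearMap.pi fun j => a j • PiLp.proj 2 (fun _ : ι => V) j

@[simp]
theorem fanOut_apply (a : ι → ℝ) (x : V) (j : ι) : fanOut V a x j = a j • x := rfl

@[simp]
theorem coordinateScaling_apply (a : ι → ℝ) (w : PiLp 2 fun _ : ι => V) (j : ι) :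
    coordinateScaling V a w j = a j • w j := rfl

/-- The signed plasma frequency `Z √(4π / m)` of each species. -/
noncomputable def plasmaFrequency (m Z : ι → ℝ) (j : ι) : ℝ := √(4 * π * m j) * (Z j / m j)

theorem sqrt_mul_plasmaFrequency {m : ι → ℝ} {j : ι} (hm : 0 < m j) (Z : ι → ℝ) :
    √(4 * π * m j) * plasmaFrequency m Z j = 4 * π * Z j := by
  rw [plasmaFrequency, ← mul_assoc, Real.mul_self_sqrt (by positivity)]
  field_simp

theorem plasmaFrequency_sq {m : ι → ℝ} {j : ι} (hm : 0 < m j) (Z : ι → ℝ) :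
    plasmaFrequency m Z j ^ 2 = 4 * π * (Z j ^ 2 / m j) := by
  rw [plasmaFrequency, mul_pow, Real.sq_sqrt (by positivity)]
  field_simp

variable [Fintype ι]

theorem norm_fanOut_sq (a : ι → ℝ) (x : V) : ‖fanOut V a x‖ ^ 2 = (∑ j, a j ^ 2) * ‖x‖ ^ 2 := by
  simp only [PiLp.norm_sq_eq_of_L2, fanOut_apply, norm_smul, mul_pow, Real.norm_eq_abs, sq_abs,
    Finset.sum_mul]

theorem mul_norm_sq_le_inner_coordinateScaling {a : ι → ℝ} {a₀ : ℝ} (ha : ∀ j, a₀ ≤ a j)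
    (w : PiLp 2 fun _ : ι => V) : a₀ * ‖w‖ ^ 2 ≤ ⟪coordinateScaling V a w, w⟫_ℝ := by
  simp only [PiLp.norm_sq_eq_of_L2, PiLp.inner_apply, coordinateScaling_apply,
    real_inner_smul_left, real_inner_self_eq_norm_sq, Finset.mul_sum]
  gcongr with j
  exact ha j

theorem adjoint_fanOut_apply [CompleteSpace V] (a : ι → ℝ) (w : PiLp 2 fun _ : ι => V) :
    ((fanOut V a)†) w = ∑ j, a j • w j := by
  refine ext_inner_right ℝ fun x => ?_
  simp only [ContinuousLinearMap.adjoint_inner_left, PiLp.inner_apply, fanOut_apply, sum_inner,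
    real_inner_smul_left, real_inner_smul_right]

theorem isDarcyLaw_fanOut [CompleteSpace V] {a ν : ι → ℝ} {c σ : ℝ} (hν : ∀ j, 0 < ν j)
    (hσ : 0 < σ) (hσc : σ * ∑ j, a j ^ 2 / ν j = c) :
    IsDarcyLaw (fanOut V a) (coordinateScaling V ν) c (fanOut V fun j => σ * (a j / ν j)) σ where
  pos := hσ
  damping_apply x := by
    ext j
    have := (hν j).ne'
    simp only [coordinateScaling_apply, fanOut_apply, PiLp.smul_apply, smul_smul]
    congr 1
    field_simp
  adjoint_apply x := by
    simp only [adjoint_fanOut_apply, fanOut_apply, smul_smul, ← Finset.sum_smul]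
    rw [← hσc, Finset.mul_sum]
    congr 2 with j
    ring

/-- A transverse mode of the Maxwell system at frequency `q` for species with masses `m`, friction
coefficients `ν`, charges `Z` and velocities `u`. The unknown `β` stands for `|q|⁻¹` times the curl
of the magnetic field, so that it has the direction of `E`. -/
structure IsTransverseMode (m ν Z : ι → ℝ) (c q : ℝ) (u : ι → ℝ → V) (E β : ℝ → V) : Prop where
  velocity : ∀ j t, 0 ≤ t → HasDerivAt (u j) ((Z j / m j) • E t - ν j • u j t) t
  electric : ∀ t, 0 ≤ t → HasDerivAt E ((c * q) • β t - (4 * π) • ∑ j, Z j • u j t) t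
  magnetic : ∀ t, 0 ≤ t → HasDerivAt β (-(c * q) • E t) t

/-- The velocities scaled by `√(4πm)`, which makes their coupling to the electric field
skew-symmetric. -/
noncomputable def massWeighted (m : ι → ℝ) (u : ι → ℝ → V) (t : ℝ) : PiLp 2 fun _ : ι => V :=
  WithLp.toLp 2 fun j => √(4 * π * m j) • u j t

/-- The electric field per unit of curl of the magnetic field in the generalized Darcy law. -/
noncomputable def darcyResistivity (m ν Z : ι → ℝ) (c : ℝ) : ℝ :=
  c / (4 * π * ∑ j, Z j ^ 2 / (m j * ν j))

/-- The mass-weighted velocities per unit of curl of the magnetic field in the generalized Darcy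
law. -/
noncomputable def darcyMobility (V : Type*) [NormedAddCommGroup V] [InnerProductSpace ℝ V]
    (m ν Z : ι → ℝ) (c : ℝ) : V →L[ℝ] PiLp 2 fun _ : ι => V :=
  fanOut V fun j => darcyResistivity m ν Z c * (plasmaFrequency m Z j / ν j)

variable {m ν Z : ι → ℝ} {c q : ℝ}

theorem sqrt_energy_massWeighted_le (hm : ∀ j, 0 < m j) (u : ι → ℝ → V) (x y : V) (t : ℝ) :
    √(energy (massWeighted m u t, x, y))
      ≤ √(1 + ∑ j, 4 * π * m j) * √(∑ j, ‖u j t‖ ^ 2 + ‖x‖ ^ 2 + ‖y‖ ^ 2) := by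
  set M := 1 + ∑ j, 4 * π * m j
  have hmass : ∀ j, 0 ≤ 4 * π * m j := fun j => by have := hm j; positivity
  have hM : ∀ j, 4 * π * m j ≤ M := fun j =>
    (Finset.single_le_sum (fun i _ => hmass i) (Finset.mem_univ j)).trans
      (le_add_of_nonneg_left zero_le_one)
  have hM₁ : 1 ≤ M := le_add_of_nonneg_right (Finset.sum_nonneg fun j _ => hmass j)
  have hweighted : ‖massWeighted m u t‖ ^ 2 ≤ M * ∑ j, ‖u j t‖ ^ 2 := by
    simp only [PiLp.norm_sq_eq_of_L2, massWeighted, norm_smul, mul_pow, Real.norm_eq_abs, sq_abs,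
      Real.sq_sqrt (hmass _), Finset.mul_sum]
    gcongr with j
    exact hM j
  rw [← Real.sqrt_mul (by positivity)]
  refine Real.sqrt_le_sqrt ?_
  rw [energy, mul_add, mul_add]
  gcongr <;> exact le_mul_of_one_le_left (sq_nonneg _) hM₁

theorem norm_velocity_sub_le (hm : ∀ j, 0 < m j) (u : ι → ℝ → V) (x y : V) (t : ℝ) (j : ι) :
    ‖u j t - (q * (darcyResistivity m ν Z c * (Z j / (m j * ν j)))) • y‖
      ≤ (√(4 * π * m j))⁻¹ * ‖(massWeighted m u t, x)
        - darcyProfile (darcyMobility V m ν Z c) (darcyResistivity m ν Z c) q y‖ := by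
  have hs : 0 < √(4 * π * m j) := by have := hm j; positivity
  rw [le_inv_mul_iff₀ hs, ← Real.norm_of_nonneg hs.le, ← norm_smul]
  refine le_trans (le_of_eq_of_le (congrArg norm ?_) (PiLp.norm_apply_le (massWeighted m u t
    - (darcyProfile (darcyMobility V m ν Z c) (darcyResistivity m ν Z c) q y).1) j))
    (le_max_left _ _)
  simp only [massWeighted, darcyProfile, darcyMobility, PiLp.sub_apply, PiLp.smul_apply,
    fanOut_apply, smul_sub, smul_smul, plasmaFrequency]
  congr 2
  field_simp

variable [CompleteSpace V] {u : ι → ℝ → V} {E β : ℝ → V}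

theorem IsTransverseMode.hasDerivAt (hm : ∀ j, 0 < m j) (h : IsTransverseMode m ν Z c q u E β)
    {t : ℝ} (ht : 0 ≤ t) :
    HasDerivAt (fun s => (massWeighted m u s, E s, β s))
      (dampedMaxwell (fanOut V (plasmaFrequency m Z)) (coordinateScaling V ν) c q
        (massWeighted m u t, E t, β t)) t := by
  have hw := (PiLp.hasFDerivAt_toLp 2 (𝕜 := ℝ) fun j => √(4 * π * m j) • u j t).comp_hasDerivAt t
    (hasDerivAt_pi.2 fun j => (h.velocity j t ht).const_smul (√(4 * π * m j)))
  refine HasDerivAt.congr_deriv (hw.prodMk ((h.electric t ht).prodMk (h.magnetic t ht)))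
    (Prod.ext ?_ (Prod.ext ?_ rfl))
  · ext j
    change √(4 * π * m j) • ((Z j / m j) • E t - ν j • u j t)
      = plasmaFrequency m Z j • E t - ν j • √(4 * π * m j) • u j t
    rw [plasmaFrequency]
    module
  · have hsource : ∀ j, plasmaFrequency m Z j • √(4 * π * m j) • u j t = (4 * π) • Z j • u j t :=
      fun j => by rw [smul_smul, smul_smul, mul_comm, sqrt_mul_plasmaFrequency (hm j)]
    simp only [dampedMaxwell, adjoint_fanOut_apply, massWeighted, hsource, Finset.smul_sum]

theorem sum_sq_div_pos {a d : ι → ℝ} (ha : a ≠ 0) (hd : ∀ j, 0 < d j) :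
    0 < ∑ j, a j ^ 2 / d j := by
  obtain ⟨i, hi⟩ := Function.ne_iff.1 ha
  exact Finset.sum_pos' (fun j _ => div_nonneg (sq_nonneg _) (hd j).le)
    ⟨i, Finset.mem_univ i, div_pos (sq_pos_of_ne_zero hi) (hd i)⟩

theorem isDarcyLaw_plasmaFrequency (hm : ∀ j, 0 < m j) (hν : ∀ j, 0 < ν j) (hZ : Z ≠ 0)
    (hc : 0 < c) :
    IsDarcyLaw (fanOut V (plasmaFrequency m Z)) (coordinateScaling V ν) c
      (darcyMobility V m ν Z c) (darcyResistivity m ν Z c) := by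
  have hsum := sum_sq_div_pos hZ fun j => mul_pos (hm j) (hν j)
  refine isDarcyLaw_fanOut hν (by unfold darcyResistivity; positivity) ?_
  have hconductivity : ∑ j, plasmaFrequency m Z j ^ 2 / ν j
      = 4 * π * ∑ j, Z j ^ 2 / (m j * ν j) := by
    rw [Finset.mul_sum]
    refine Finset.sum_congr rfl fun j _ => ?_
    rw [plasmaFrequency_sq (hm j), mul_div_assoc, div_div]
  rw [hconductivity, darcyResistivity, div_mul_cancel₀]
  positivity

theorem exists_darcyErrorBound_massWeighted (hm : ∀ j, 0 < m j) (hν : ∀ j, 0 < ν j) (hZ : Z ≠ 0)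
    (hc : 0 < c) :
    ∃ C lam, 0 < C ∧ 0 < lam ∧ ∀ (q : ℝ) (u : ι → ℝ → V) (E β : ℝ → V),
      IsTransverseMode m ν Z c q u E β → ∀ t, 0 ≤ t →
        DarcyErrorBound C lam q t (√(energy (massWeighted m u 0, E 0, β 0))) ‖β 0‖
          ‖(massWeighted m u t, E t)
            - darcyProfile (darcyMobility V m ν Z c) (darcyResistivity m ν Z c) q
              (rexp (-(c * darcyResistivity m ν Z c * q ^ 2) * t) • β 0)‖ := by
  have hκ : 0 < ∑ j, plasmaFrequency m Z j ^ 2 := by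
    have := sum_sq_div_pos hZ hm
    simp only [plasmaFrequency_sq (hm _), ← Finset.mul_sum]
    positivity
  obtain ⟨ν₀, hν₀, hle⟩ : ∃ ν₀, 0 < ν₀ ∧ ∀ j, ν₀ ≤ ν j := by
    obtain ⟨i, -⟩ := Function.ne_iff.1 hZ
    have : Nonempty ι := ⟨i⟩
    obtain ⟨i₀, hi₀⟩ := Finite.exists_min ν
    exact ⟨ν i₀, hν i₀, hi₀⟩
  obtain ⟨C, lam, hC, hlam, hbound⟩ :=
    (isDarcyLaw_plasmaFrequency (V := V) hm hν hZ hc).exists_darcyErrorBound hc hν₀ hκ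
      (fun x => (norm_fanOut_sq _ x).ge) (mul_norm_sq_le_inner_coordinateScaling hle)
  exact ⟨C, lam, hC, hlam, fun q u E β h t ht =>
    hbound q _ (fun s hs => h.hasDerivAt hm hs) t ht⟩

theorem exists_darcyErrorBound_velocity_electric (hm : ∀ j, 0 < m j) (hν : ∀ j, 0 < ν j)
    (hZ : Z ≠ 0) (hc : 0 < c) :
    ∃ C lam, 0 < C ∧ 0 < lam ∧ ∀ (q : ℝ) (u : ι → ℝ → V) (E β : ℝ → V),
      IsTransverseMode m ν Z c q u E β → ∀ t, 0 ≤ t →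
        ∀ U, √(∑ j, ‖u j 0‖ ^ 2 + ‖E 0‖ ^ 2 + ‖β 0‖ ^ 2) ≤ U → ∀ b, ‖β 0‖ ≤ b →
        (∀ j, DarcyErrorBound C lam q t U b
          ‖u j t - (q * (darcyResistivity m ν Z c * (Z j / (m j * ν j))))
            • rexp (-(c * darcyResistivity m ν Z c * q ^ 2) * t) • β 0‖) ∧
        DarcyErrorBound C lam q t U b
          ‖E t - (q * darcyResistivity m ν Z c)
            • rexp (-(c * darcyResistivity m ν Z c * q ^ 2) * t) • β 0‖ := by
  obtain ⟨C, lam, hC, hlam, hbound⟩ := exists_darcyErrorBound_massWeighted (V := V) hm hν hZ hc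
  set M := √(1 + ∑ j, 4 * π * m j)
  have hmass : 0 ≤ ∑ j, 4 * π * m j := Finset.sum_nonneg fun j _ => by have := hm j; positivity
  have hM : 1 ≤ M := Real.one_le_sqrt.2 (by linarith)
  set P := 1 + ∑ j, (√(4 * π * m j))⁻¹
  have hP : ∀ j, (√(4 * π * m j))⁻¹ ≤ P := fun j =>
    (Finset.single_le_sum (f := fun j => (√(4 * π * m j))⁻¹) (fun i _ => by positivity)
      (Finset.mem_univ j)).trans (le_add_of_nonneg_left zero_le_one)
  have hP₁ : 1 ≤ P := le_add_of_nonneg_right (Finset.sum_nonneg fun j _ => by positivity)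
  refine ⟨P * C * M, lam, by positivity, hlam, fun q u E β h t ht U hU b hb => ?_⟩
  have hU' := (sqrt_energy_massWeighted_le hm u (E 0) (β 0) 0).trans
    (mul_le_mul_of_nonneg_left hU (zero_le_one.trans hM))
  have hb' : ‖β 0‖ ≤ M * b :=
    hb.trans (le_mul_of_one_le_left ((norm_nonneg _).trans hb) hM)
  refine ⟨fun j => (hbound q u E β h t ht).of_le_mul hC.le (by positivity) ?_ hU' hb',
    (hbound q u E β h t ht).of_le_mul hC.le (by positivity) ?_ hU' hb'⟩
  · exact (norm_velocity_sub_le hm u (E t) _ t j).trans (by gcongr; exact hP j)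
  · exact (le_max_right _ _).trans (le_mul_of_one_le_left (by positivity) hP₁)

end Multispecies

section Fourier

theorem hnorm_eq_norm_toLp (v : Fin 3 → ℂ) : hnorm v = ‖WithLp.toLp 2 v‖ := by
  simp only [hnorm, hsq, EuclideanSpace.norm_eq, Complex.normSq_eq_norm_sq]

theorem hsq_eq_norm_toLp_sq (v : Fin 3 → ℂ) : hsq v = ‖WithLp.toLp 2 v‖ ^ 2 := by
  simp only [hsq, EuclideanSpace.norm_sq_eq, Complex.normSq_eq_norm_sq]

/-- The curl in Fourier variables, that is, the cross product with `i k`. -/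
noncomputable def curlSymbol (k : Fin 3 → ℝ) :
    EuclideanSpace ℂ (Fin 3) →L[ℝ] EuclideanSpace ℂ (Fin 3) :=
  ((WithLp.linearEquiv 2 ℂ (Fin 3 → ℂ)).symm.toLinearMap ∘ₗ crossProduct (ikv k) ∘ₗ
    (WithLp.linearEquiv 2 ℂ (Fin 3 → ℂ)).toLinearMap).toContinuousLinearMap.restrictScalars ℝ

@[simp]
theorem curlSymbol_apply (k : Fin 3 → ℝ) (v : EuclideanSpace ℂ (Fin 3)) (j : Fin 3) :
    curlSymbol k v j = cross3 (ikv k) v j := rfl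

theorem curlSymbol_curlSymbol {k : Fin 3 → ℝ} {v : EuclideanSpace ℂ (Fin 3)}
    (hv : ∑ j, (k j : ℂ) * v j = 0) : curlSymbol k (curlSymbol k v) = (∑ j, k j ^ 2) • v := by
  have hlong : ikv k ⬝ᵥ (v : Fin 3 → ℂ) = 0 := by
    simp only [dotProduct, ikv, mul_assoc, ← Finset.mul_sum, hv, mul_zero]
  have hsquare : ikv k ⬝ᵥ ikv k = -((∑ j, k j ^ 2 : ℝ) : ℂ) := by
    simp only [dotProduct, ikv, mul_mul_mul_comm, Complex.I_mul_I, ← Finset.mul_sum]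
    push_cast
    simp only [sq, neg_one_mul]
  ext j
  change crossProduct (ikv k) (crossProduct (ikv k) v) j = _
  rw [cross_cross_eq_smul_sub_smul', hlong, hsquare]
  simp

theorem norm_curlSymbol_le (k : Fin 3 → ℝ) (v : EuclideanSpace ℂ (Fin 3)) :
    ‖curlSymbol k v‖ ≤ √(∑ j, k j ^ 2) * ‖v‖ := by
  have hlagrange : ‖curlSymbol k v‖ ^ 2 + Complex.normSq (∑ j, (k j : ℂ) * v j)
      = (∑ j, k j ^ 2) * ‖v‖ ^ 2 := by
    simp only [EuclideanSpace.norm_sq_eq, ← Complex.normSq_eq_norm_sq, curlSymbol_apply, cross3,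
      ikv, Fin.sum_univ_three, Complex.normSq_apply]
    simp only [Matrix.cons_val_zero, Matrix.cons_val_one, Matrix.cons_val, sub_re, sub_im, add_re,
      add_im, mul_re, mul_im, I_re, I_im, ofReal_re, ofReal_im, zero_mul, mul_zero, one_mul,
      sub_self, sub_zero, zero_sub, add_zero, zero_add, sub_neg_eq_add]
    ring
  refine le_of_sq_le_sq ?_ (by positivity)
  rw [mul_pow, Real.sq_sqrt (Finset.sum_nonneg fun j _ => sq_nonneg (k j)), ← hlagrange]
  exact le_add_of_nonneg_right (Complex.normSq_nonneg _)

/-- A solution of the Fourier-transformed multispecies electromagnetic system at frequency `k`,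
with transverse electric field. -/
structure IsFourierSolution {ι : Type*} [Fintype ι] (m ν Z : ι → ℝ) (c : ℝ) (k : Fin 3 → ℝ)
    (u : ι → ℝ → EuclideanSpace ℂ (Fin 3)) (E B : ℝ → EuclideanSpace ℂ (Fin 3)) : Prop where
  velocity : ∀ j t, 0 ≤ t → HasDerivAt (u j) ((Z j / m j) • E t - ν j • u j t) t
  electric : ∀ t, 0 ≤ t → HasDerivAt E (c • curlSymbol k (B t) - (4 * π) • ∑ j, Z j • u j t) t
  magnetic : ∀ t, 0 ≤ t → HasDerivAt B (-c • curlSymbol k (E t)) t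
  transverse : ∀ t, 0 ≤ t → ∑ j, (k j : ℂ) * E t j = 0

/-- The magnetic field in direction of the electric field; for `k = 0` it vanishes. -/
noncomputable def rotatedMagnetic (k : Fin 3 → ℝ) (B : EuclideanSpace ℂ (Fin 3)) :
    EuclideanSpace ℂ (Fin 3) := (√(∑ j, k j ^ 2))⁻¹ • curlSymbol k B

theorem smul_rotatedMagnetic (k : Fin 3 → ℝ) (B : EuclideanSpace ℂ (Fin 3)) :
    √(∑ j, k j ^ 2) • rotatedMagnetic k B = curlSymbol k B := by
  rcases eq_or_ne (√(∑ j, k j ^ 2)) 0 with hk | hk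
  · have := norm_curlSymbol_le k B
    rw [hk, zero_mul, norm_le_zero_iff] at this
    rw [hk, zero_smul, this]
  · exact smul_inv_smul₀ hk _

theorem norm_rotatedMagnetic_le (k : Fin 3 → ℝ) (B : EuclideanSpace ℂ (Fin 3)) :
    ‖rotatedMagnetic k B‖ ≤ ‖B‖ := by
  rw [rotatedMagnetic, norm_smul, norm_inv, Real.norm_of_nonneg (Real.sqrt_nonneg _)]
  exact inv_mul_le_of_le_mul₀ (Real.sqrt_nonneg _) (norm_nonneg _) (norm_curlSymbol_le k B)

variable {ι : Type*} [Fintype ι] {m ν Z : ι → ℝ} {c : ℝ}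

theorem IsFourierSolution.isTransverseMode {k : Fin 3 → ℝ}
    {u : ι → ℝ → EuclideanSpace ℂ (Fin 3)} {E B : ℝ → EuclideanSpace ℂ (Fin 3)}
    (h : IsFourierSolution m ν Z c k u E B) :
    IsTransverseMode m ν Z c (√(∑ j, k j ^ 2)) u E fun t => rotatedMagnetic k (B t) where
  velocity := h.velocity
  electric t ht := by
    rw [mul_smul, smul_rotatedMagnetic]
    exact h.electric t ht
  magnetic t ht := by
    refine (((curlSymbol k).hasFDerivAt.comp_hasDerivAt t (h.magnetic t ht)).const_smul
      (√(∑ j, k j ^ 2))⁻¹).congr_deriv ?_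
    set q := √(∑ j, k j ^ 2)
    have hq : ∑ j, k j ^ 2 = q ^ 2 :=
      (Real.sq_sqrt (Finset.sum_nonneg fun j _ => sq_nonneg (k j))).symm
    rw [map_smul, curlSymbol_curlSymbol (h.transverse t ht), hq, smul_smul, smul_smul]
    congr 1
    rcases eq_or_ne q 0 with hq₀ | hq₀
    · simp [hq₀]
    · field_simp

theorem exists_darcyErrorBound_fourier (hm : ∀ j, 0 < m j) (hν : ∀ j, 0 < ν j) (hZ : Z ≠ 0)
    (hc : 0 < c) :
    ∃ C lam, 0 < C ∧ 0 < lam ∧ ∀ (k : Fin 3 → ℝ) (u : ι → ℝ → EuclideanSpace ℂ (Fin 3))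
      (E B : ℝ → EuclideanSpace ℂ (Fin 3)), IsFourierSolution m ν Z c k u E B → ∀ t, 0 ≤ t →
        (∀ j, DarcyErrorBound C lam (√(∑ j, k j ^ 2)) t
          (√(∑ j, ‖u j 0‖ ^ 2 + ‖E 0‖ ^ 2 + ‖B 0‖ ^ 2)) ‖B 0‖
          ‖u j t - (darcyResistivity m ν Z c * (Z j / (m j * ν j))) • curlSymbol k
            (rexp (-(c * darcyResistivity m ν Z c * (∑ j, k j ^ 2) * t)) • B 0)‖) ∧
        DarcyErrorBound C lam (√(∑ j, k j ^ 2)) t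
          (√(∑ j, ‖u j 0‖ ^ 2 + ‖E 0‖ ^ 2 + ‖B 0‖ ^ 2)) ‖B 0‖
          ‖E t - darcyResistivity m ν Z c • curlSymbol k
            (rexp (-(c * darcyResistivity m ν Z c * (∑ j, k j ^ 2) * t)) • B 0)‖ := by
  obtain ⟨C, lam, hC, hlam, hbound⟩ :=
    exists_darcyErrorBound_velocity_electric (V := EuclideanSpace ℂ (Fin 3)) hm hν hZ hc
  refine ⟨C, lam, hC, hlam, fun k u E B h t ht => ?_⟩
  have hprofile : ∀ a r : ℝ, (√(∑ j, k j ^ 2) * a) • r • rotatedMagnetic k (B 0)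
      = a • curlSymbol k (r • B 0) := fun a r => by
    rw [map_smul, ← smul_rotatedMagnetic, smul_smul, smul_smul, smul_smul]
    ring_nf
  have hβ := norm_rotatedMagnetic_le k (B 0)
  have hU : √(∑ j, ‖u j 0‖ ^ 2 + ‖E 0‖ ^ 2 + ‖rotatedMagnetic k (B 0)‖ ^ 2)
      ≤ √(∑ j, ‖u j 0‖ ^ 2 + ‖E 0‖ ^ 2 + ‖B 0‖ ^ 2) := by gcongr
  have := hbound _ u E _ h.isTransverseMode t ht _ hU _ hβ
  simpa only [hprofile, Real.sq_sqrt (Finset.sum_nonneg fun j _ => sq_nonneg (k j)), neg_mul]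
    using this

end Fourier

section TwoSpecies

variable {mi me νi νe e : ℝ}

theorem hasDerivAt_toLp_of_differentiable {f : ℝ → Fin 3 → ℂ} (hf : Differentiable ℝ f) (t : ℝ) :
    HasDerivAt (fun s => WithLp.toLp 2 (f s)) (WithLp.toLp 2 (deriv f t)) t :=
  (PiLp.hasFDerivAt_toLp 2 (𝕜 := ℝ) (f t)).comp_hasDerivAt t (hf t).hasDerivAt

theorem hnorm_sub_eq_norm_toLp_sub {k : Fin 3 → ℝ} {v p b : Fin 3 → ℂ} {a s : ℝ}
    (hp : ∀ j, p j = a * cross3 (ikv k) (fun i => Complex.exp (-(s : ℂ)) * b i) j) :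
    hnorm (fun j => v j - p j)
      = ‖WithLp.toLp 2 v - a • curlSymbol k (rexp (-s) • WithLp.toLp 2 b)‖ := by
  rw [hnorm_eq_norm_toLp]
  congr 1
  ext j
  simp only [PiLp.sub_apply, PiLp.smul_apply, curlSymbol_apply, hp, Complex.real_smul]
  congr 4
  ext i
  simp

theorem isFourierSolution_two {c : ℝ} (hmi : mi ≠ 0) (hme : me ≠ 0)
    {k : Fin 3 → ℝ} {ui ue E B : ℝ → Fin 3 → ℂ} (hui : Differentiable ℝ ui)
    (hue : Differentiable ℝ ue) (hE : Differentiable ℝ E) (hB : Differentiable ℝ B)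
    (htransverse : ∀ t, ∑ j, (k j : ℂ) * E t j = 0)
    (hion : ∀ t j, (mi : ℂ) * deriv ui t j - e * E t j + mi * νi * ui t j = 0)
    (helectron : ∀ t j, (me : ℂ) * deriv ue t j + e * E t j + me * νe * ue t j = 0)
    (hampere : ∀ t j, deriv E t j - c * cross3 (ikv k) (B t) j
      + 4 * (π : ℂ) * e * (ui t j - ue t j) = 0)
    (hfaraday : ∀ t j, deriv B t j + c * cross3 (ikv k) (E t) j = 0) :
    IsFourierSolution ![mi, me] ![νi, νe] ![e, -e] c k
      ![fun t => WithLp.toLp 2 (ui t), fun t => WithLp.toLp 2 (ue t)]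
      (fun t => WithLp.toLp 2 (E t)) (fun t => WithLp.toLp 2 (B t)) where
  velocity := by
    have hmi' : (mi : ℂ) ≠ 0 := Complex.ofReal_ne_zero.2 hmi
    have hme' : (me : ℂ) ≠ 0 := Complex.ofReal_ne_zero.2 hme
    refine Fin.forall_fin_two.2 ⟨fun t _ => ?_, fun t _ => ?_⟩
    · refine (hasDerivAt_toLp_of_differentiable hui t).congr_deriv ?_
      ext j
      simp only [Matrix.cons_val_zero, PiLp.sub_apply, PiLp.smul_apply, Complex.real_smul,
        Complex.ofReal_div]
      field_simp
      linear_combination hion t j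
    · refine (hasDerivAt_toLp_of_differentiable hue t).congr_deriv ?_
      ext j
      simp only [Matrix.cons_val_one, Matrix.cons_val_fin_one, PiLp.sub_apply, PiLp.smul_apply,
        Complex.real_smul, Complex.ofReal_div, Complex.ofReal_neg]
      field_simp
      linear_combination helectron t j
  electric t _ := by
    refine (hasDerivAt_toLp_of_differentiable hE t).congr_deriv ?_
    ext j
    simp only [Fin.sum_univ_two, Matrix.cons_val_zero, Matrix.cons_val_one, neg_smul, smul_add,
      smul_neg, PiLp.sub_apply, PiLp.add_apply, PiLp.neg_apply, PiLp.smul_apply,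
      curlSymbol_apply, Complex.real_smul, Complex.ofReal_mul, Complex.ofReal_ofNat]
    linear_combination hampere t j
  magnetic t _ := by
    refine (hasDerivAt_toLp_of_differentiable hB t).congr_deriv ?_
    ext j
    simp only [neg_smul, PiLp.neg_apply, PiLp.smul_apply, curlSymbol_apply, Complex.real_smul]
    linear_combination hfaraday t j
  transverse t _ := htransverse t

theorem darcyResistivity_two (hmi : 0 < mi) (hme : 0 < me) (hνi : 0 < νi)
    (hνe : 0 < νe) (he : e ≠ 0) (c : ℝ) :
    darcyResistivity ![mi, me] ![νi, νe] ![e, -e] c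
      = c / (4 * π * e ^ 2) * (mi * νi * me * νe / (mi * νi + me * νe)) := by
  have := mul_pos hmi hνi
  have := mul_pos hme hνe
  simp only [darcyResistivity, Fin.sum_univ_two, Matrix.cons_val_zero, Matrix.cons_val_one, neg_sq]
  field_simp
  ring

theorem darcyResistivity_two_mul_ion (hmi : 0 < mi) (hme : 0 < me)
    (hνi : 0 < νi) (hνe : 0 < νe) (he : e ≠ 0) (c : ℝ) :
    darcyResistivity ![mi, me] ![νi, νe] ![e, -e] c * (e / (mi * νi))
      = c / (4 * π * e) * (me * νe / (mi * νi + me * νe)) := by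
  rw [darcyResistivity_two hmi hme hνi hνe he]
  field_simp

theorem darcyResistivity_two_mul_electron (hmi : 0 < mi) (hme : 0 < me)
    (hνi : 0 < νi) (hνe : 0 < νe) (he : e ≠ 0) (c : ℝ) :
    darcyResistivity ![mi, me] ![νi, νe] ![e, -e] c * (-e / (me * νe))
      = -(c / (4 * π * e) * (mi * νi / (mi * νi + me * νe))) := by
  rw [darcyResistivity_two hmi hme hνi hνe he]
  field_simp

theorem mul_darcyResistivity_two (hmi : 0 < mi) (hme : 0 < me)
    (hνi : 0 < νi) (hνe : 0 < νe) (he : e ≠ 0) (c : ℝ) :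
    c * darcyResistivity ![mi, me] ![νi, νe] ![e, -e] c
      = c ^ 2 * mi * νi * me * νe / (4 * π * e ^ 2 * (mi * νi + me * νe)) := by
  rw [darcyResistivity_two hmi hme hνi hνe he]
  field_simp

theorem darcyErrorBound_sqrt_iff {C lam s t U b x : ℝ} (hs : 0 ≤ s) :
    DarcyErrorBound C lam (√s) t U b x ↔
      (√s ≤ 1 → x ≤ C * (s * rexp (-(lam * s * t)) + rexp (-(lam * t))) * U) ∧
      (1 ≤ √s → x ≤ C * rexp (-(lam * s⁻¹ * t)) * U + C * rexp (-(lam * s * t)) * √s * b) := by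
  rw [DarcyErrorBound, Real.sq_sqrt hs, abs_of_nonneg (Real.sqrt_nonneg s)]

end TwoSpecies

theorem stmt_19_general (mi me νi νe e c : ℝ)
    (hmi : 0 < mi) (hme : 0 < me) (hνi : 0 < νi) (hνe : 0 < νe)
    (he : e ≠ 0) (hc : 0 < c) :
    ∃ r₀ C lam : ℝ, 0 < r₀ ∧ 0 < C ∧ 0 < lam ∧
      ∀ (k : Fin 3 → ℝ) (ui ue E B : ℝ → Fin 3 → ℂ),
        Differentiable ℝ ui → Differentiable ℝ ue →
        Differentiable ℝ E → Differentiable ℝ B →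
        (∀ t : ℝ, ∑ j, (k j : ℂ) * E t j = 0) →
        (∀ (t : ℝ) (j : Fin 3), (mi : ℂ) * deriv ui t j - (e : ℂ) * E t j
          + (mi : ℂ) * (νi : ℂ) * ui t j = 0) →
        (∀ (t : ℝ) (j : Fin 3), (me : ℂ) * deriv ue t j + (e : ℂ) * E t j
          + (me : ℂ) * (νe : ℂ) * ue t j = 0) →
        (∀ (t : ℝ) (j : Fin 3), deriv E t j - (c : ℂ) * cross3 (ikv k) (B t) j
          + 4 * (π : ℂ) * (e : ℂ) * (ui t j - ue t j) = 0) →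
        (∀ (t : ℝ) (j : Fin 3), deriv B t j + (c : ℂ) * cross3 (ikv k) (E t) j = 0) →
        (let ksq : ℝ := ∑ j, (k j) ^ 2
         let μ₂ : ℝ := c ^ 2 * mi * νi * me * νe / (4 * π * e ^ 2 * (mi * νi + me * νe))
         let U0 : ℝ := Real.sqrt (hsq (ui 0) + hsq (ue 0) + hsq (E 0) + hsq (B 0))
         let Bbar : ℝ → Fin 3 → ℂ := fun t j =>
           Complex.exp (-((μ₂ * ksq * t : ℝ) : ℂ)) * B 0 j
         let uibar : ℝ → Fin 3 → ℂ := fun t j =>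
           ((c / (4 * π * e) : ℝ) : ℂ) * ((me * νe / (mi * νi + me * νe) : ℝ) : ℂ) *
             cross3 (ikv k) (Bbar t) j
         let uebar : ℝ → Fin 3 → ℂ := fun t j =>
           -(((c / (4 * π * e) : ℝ) : ℂ) * ((mi * νi / (mi * νi + me * νe) : ℝ) : ℂ) *
             cross3 (ikv k) (Bbar t) j)
         let Ebar : ℝ → Fin 3 → ℂ := fun t j =>
           ((c / (4 * π * e ^ 2) : ℝ) : ℂ) *
             ((mi * νi * me * νe / (mi * νi + me * νe) : ℝ) : ℂ) *
             cross3 (ikv k) (Bbar t) j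
         ∀ t : ℝ, 0 ≤ t →
           (Real.sqrt ksq ≤ r₀ →
             (hnorm (fun j => ui t j - uibar t j) ≤
                C * (ksq * Real.exp (-(lam * ksq * t)) + Real.exp (-(lam * t))) * U0) ∧
             (hnorm (fun j => ue t j - uebar t j) ≤
                C * (ksq * Real.exp (-(lam * ksq * t)) + Real.exp (-(lam * t))) * U0) ∧
             (hnorm (fun j => E t j - Ebar t j) ≤
                C * (ksq * Real.exp (-(lam * ksq * t)) + Real.exp (-(lam * t))) * U0)) ∧
           (r₀ ≤ Real.sqrt ksq →
             (hnorm (fun j => ui t j - uibar t j) ≤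
                C * Real.exp (-(lam * ksq⁻¹ * t)) * U0
                  + C * Real.exp (-(lam * ksq * t)) * Real.sqrt ksq * hnorm (B 0)) ∧
             (hnorm (fun j => ue t j - uebar t j) ≤
                C * Real.exp (-(lam * ksq⁻¹ * t)) * U0
                  + C * Real.exp (-(lam * ksq * t)) * Real.sqrt ksq * hnorm (B 0)) ∧
             (hnorm (fun j => E t j - Ebar t j) ≤
                C * Real.exp (-(lam * ksq⁻¹ * t)) * U0
                  + C * Real.exp (-(lam * ksq * t)) * Real.sqrt ksq * hnorm (B 0)))) := by
  have hm : ∀ j, 0 < ![mi, me] j := Fin.forall_fin_two.2 ⟨hmi, hme⟩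
  have hν : ∀ j, 0 < ![νi, νe] j := Fin.forall_fin_two.2 ⟨hνi, hνe⟩
  have hZ : ![e, -e] ≠ 0 := fun h => he (congrFun h 0)
  obtain ⟨C, lam, hC, hlam, hbound⟩ := exists_darcyErrorBound_fourier hm hν hZ hc
  refine ⟨1, C, lam, one_pos, hC, hlam, ?_⟩
  intro k ui ue E B hui hue hE hB hdivE hion helectron hampere hfaraday ksq μ₂ U0 Bbar uibar uebar
    Ebar t ht
  have hsol := isFourierSolution_two hmi.ne' hme.ne' hui hue hE hB hdivE hion helectron hampere
    hfaraday
  obtain ⟨hu, hfield⟩ := hbound k _ _ _ hsol t ht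
  have hionBound := hu 0
  have helectronBound := hu 1
  have hksq : 0 ≤ ksq := Finset.sum_nonneg fun j _ => sq_nonneg (k j)
  simp only [Fin.sum_univ_two, Matrix.cons_val_zero, Matrix.cons_val_one, ← hsq_eq_norm_toLp_sq,
    darcyResistivity_two_mul_ion hmi hme hνi hνe he, mul_darcyResistivity_two hmi hme hνi hνe he,
    darcyResistivity_two_mul_electron hmi hme hνi hνe he] at hionBound helectronBound hfield
  rw [darcyResistivity_two hmi hme hνi hνe he] at hfield
  rw [← hnorm_sub_eq_norm_toLp_sub (p := uibar t) fun j => by rw [ofReal_mul],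
    ← hnorm_eq_norm_toLp, darcyErrorBound_sqrt_iff hksq] at hionBound
  rw [← hnorm_sub_eq_norm_toLp_sub (p := uebar t) fun j => by
      rw [ofReal_neg, neg_mul, ofReal_mul],
    ← hnorm_eq_norm_toLp, darcyErrorBound_sqrt_iff hksq] at helectronBound
  rw [← hnorm_sub_eq_norm_toLp_sub (p := Ebar t) fun j => by rw [ofReal_mul],
    ← hnorm_eq_norm_toLp, darcyErrorBound_sqrt_iff hksq] at hfield
  exact ⟨fun hr => ⟨hionBound.1 hr, helectronBound.1 hr, hfield.1 hr⟩,
    fun hr => ⟨hionBound.2 hr, helectronBound.2 hr, hfield.2 hr⟩⟩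

/-- Error estimates, in both the low-frequency and the high-frequency regimes, between
the velocities and electric field of the Fourier-transformed transverse electromagnetic
system and the asymptotic diffusive Darcy profiles, assuming the zero-frequency cubic
has three distinct roots. -/
theorem stmt_19 (mi me νi νe e c : ℝ)
    (hmi : 0 < mi) (hme : 0 < me) (hνi : 0 < νi) (hνe : 0 < νe)
    (he : 0 < e) (hc : 0 < c)
    (hdisc : ∃ σ₂ σ₃ σ₄ : ℂ, σ₂ ≠ σ₃ ∧ σ₂ ≠ σ₄ ∧ σ₃ ≠ σ₄ ∧ ∀ z : ℂ,
      z ^ 3 + ((νi + νe : ℝ) : ℂ) * z ^ 2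
        + ((νi * νe + 4 * π * (e ^ 2 / mi + e ^ 2 / me) : ℝ) : ℂ) * z
        + ((4 * π * (e ^ 2 * νe / mi + e ^ 2 * νi / me) : ℝ) : ℂ)
        = (z - σ₂) * (z - σ₃) * (z - σ₄)) :
    ∃ r₀ C lam : ℝ, 0 < r₀ ∧ 0 < C ∧ 0 < lam ∧
      ∀ (k : Fin 3 → ℝ), k ≠ 0 →
      ∀ (ui ue E B : ℝ → Fin 3 → ℂ),
        Differentiable ℝ ui → Differentiable ℝ ue →
        Differentiable ℝ E → Differentiable ℝ B →
        (∀ t : ℝ, ∑ j, (k j : ℂ) * ui t j = 0) →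
        (∀ t : ℝ, ∑ j, (k j : ℂ) * ue t j = 0) →
        (∀ t : ℝ, ∑ j, (k j : ℂ) * E t j = 0) →
        (∀ t : ℝ, ∑ j, (k j : ℂ) * B t j = 0) →
        (∀ (t : ℝ) (j : Fin 3), (mi : ℂ) * deriv ui t j - (e : ℂ) * E t j
          + (mi : ℂ) * (νi : ℂ) * ui t j = 0) →
        (∀ (t : ℝ) (j : Fin 3), (me : ℂ) * deriv ue t j + (e : ℂ) * E t j
          + (me : ℂ) * (νe : ℂ) * ue t j = 0) →
        (∀ (t : ℝ) (j : Fin 3), deriv E t j - (c : ℂ) * cross3 (ikv k) (B t) j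
          + 4 * (π : ℂ) * (e : ℂ) * (ui t j - ue t j) = 0) →
        (∀ (t : ℝ) (j : Fin 3), deriv B t j + (c : ℂ) * cross3 (ikv k) (E t) j = 0) →
        (let ksq : ℝ := ∑ j, (k j) ^ 2
         let μ₂ : ℝ := c ^ 2 * mi * νi * me * νe / (4 * π * e ^ 2 * (mi * νi + me * νe))
         let U0 : ℝ := Real.sqrt (hsq (ui 0) + hsq (ue 0) + hsq (E 0) + hsq (B 0))
         let Bbar : ℝ → Fin 3 → ℂ := fun t j =>
           Complex.exp (-((μ₂ * ksq * t : ℝ) : ℂ)) * B 0 j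
         let uibar : ℝ → Fin 3 → ℂ := fun t j =>
           ((c / (4 * π * e) : ℝ) : ℂ) * ((me * νe / (mi * νi + me * νe) : ℝ) : ℂ) *
             cross3 (ikv k) (Bbar t) j
         let uebar : ℝ → Fin 3 → ℂ := fun t j =>
           -(((c / (4 * π * e) : ℝ) : ℂ) * ((mi * νi / (mi * νi + me * νe) : ℝ) : ℂ) *
             cross3 (ikv k) (Bbar t) j)
         let Ebar : ℝ → Fin 3 → ℂ := fun t j =>
           ((c / (4 * π * e ^ 2) : ℝ) : ℂ) *
             ((mi * νi * me * νe / (mi * νi + me * νe) : ℝ) : ℂ) *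
             cross3 (ikv k) (Bbar t) j
         ∀ t : ℝ, 0 ≤ t →
           (Real.sqrt ksq ≤ r₀ →
             (hnorm (fun j => ui t j - uibar t j) ≤
                C * (ksq * Real.exp (-(lam * ksq * t)) + Real.exp (-(lam * t))) * U0) ∧
             (hnorm (fun j => ue t j - uebar t j) ≤
                C * (ksq * Real.exp (-(lam * ksq * t)) + Real.exp (-(lam * t))) * U0) ∧
             (hnorm (fun j => E t j - Ebar t j) ≤
                C * (ksq * Real.exp (-(lam * ksq * t)) + Real.exp (-(lam * t))) * U0)) ∧
           (r₀ ≤ Real.sqrt ksq →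
             (hnorm (fun j => ui t j - uibar t j) ≤
                C * Real.exp (-(lam * ksq⁻¹ * t)) * U0
                  + C * Real.exp (-(lam * ksq * t)) * Real.sqrt ksq * hnorm (B 0)) ∧
             (hnorm (fun j => ue t j - uebar t j) ≤
                C * Real.exp (-(lam * ksq⁻¹ * t)) * U0
                  + C * Real.exp (-(lam * ksq * t)) * Real.sqrt ksq * hnorm (B 0)) ∧
             (hnorm (fun j => E t j - Ebar t j) ≤
                C * Real.exp (-(lam * ksq⁻¹ * t)) * U0
                  + C * Real.exp (-(lam * ksq * t)) * Real.sqrt ksq * hnorm (B 0)))) := by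
  obtain ⟨r₀, C, lam, hr₀, hC, hlam, hbound⟩ :=
    stmt_19_general mi me νi νe e c hmi hme hνi hνe he.ne' hc
  exact ⟨r₀, C, lam, hr₀, hC, hlam, fun k _ ui ue E B hui hue hE hB _ _ hdivE _ =>
    hbound k ui ue E B hui hue hE hB hdivE⟩
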